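/- arXiv:1907.04636 — 2 statements merged into one kernel-verified Lean document; each statement's English description precedes it below -/
import Mathlib

section
/- Assume condition (R) and let α∈[0,1). Then the radius of starlikeness of order α of g_{γ,σ}(·;q) equals the smallest positive root y_{γ,σ,1}(q) of the equation r·λ_{γ,σ}'(r;q) − (α−1)·λ_{γ,σ}(r;q) = 0 (derivative with respect to the real variable r). -/
noncomputable def qPochInf (a q : ℝ) : ℝ := ∏' k : ℕ, (1 - a * q ^ k)

noncomputable def qGamma (q x : ℝ) : ℝ :=
  qPochInf q q * (1 - q) ^ (1 - x) / qPochInf (q ^ x) q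

noncomputable def qML (γ σ q : ℝ) (z : ℂ) : ℂ :=
  ∑' n : ℕ,
    (((-1) ^ n * σ ^ (2 * n) * q ^ (n * (n - 1)) / qGamma q (2 * n + γ + 1) : ℝ) : ℂ) * z ^ (2 * n)

noncomputable def qMLR (γ σ q : ℝ) (x : ℝ) : ℝ :=
  ∑' n : ℕ,
    ((-1) ^ n * σ ^ (2 * n) * q ^ (n * (n - 1)) / qGamma q (2 * n + γ + 1)) * x ^ (2 * n)

def condR (q γ : ℝ) : Prop :=
  (γ = 0 ∨ γ = 1) ∨
    (γ ∈ Set.Ioo (0 : ℝ) 2 ∧ γ ≠ 1 ∧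
      1 < q⁻¹ * (1 - q) * (1 - q ^ (γ + 1)) * (1 - q ^ (γ + 2)))

noncomputable def radiusStarlike (α : ℝ) (f : ℂ → ℂ) : ℝ :=
  sSup {r : ℝ | 0 < r ∧ ∀ z : ℂ, 0 < ‖z‖ → ‖z‖ < r →
    α < (z * deriv f z / f z).re}

noncomputable def radiusConvex (α : ℝ) (f : ℂ → ℂ) : ℝ :=
  sSup {r : ℝ | 0 < r ∧ ∀ z : ℂ, ‖z‖ < r →
    α < (1 + z * deriv (deriv f) z / deriv f z).re}

noncomputable def fML (γ σ q : ℝ) (z : ℂ) : ℂ :=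
  Complex.exp ((1 / ((γ : ℂ) + 1)) *
    Complex.log (z ^ ((γ : ℂ) + 1) * (qGamma q (γ + 1) : ℂ) * qML γ σ q z))

noncomputable def gML (γ σ q : ℝ) (z : ℂ) : ℂ :=
  z * (qGamma q (γ + 1) : ℂ) * qML γ σ q z

noncomputable def hML (γ σ q : ℝ) (z : ℂ) : ℂ :=
  z * (qGamma q (γ + 1) : ℂ) *
    ∑' n : ℕ,
      (((-1) ^ n * σ ^ (2 * n) * q ^ (n * (n - 1)) / qGamma q (2 * n + γ + 1) : ℝ) : ℂ) * z ^ n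

noncomputable def hMLR (γ σ q : ℝ) (x : ℝ) : ℝ :=
  x * qGamma q (γ + 1) *
    ∑' n : ℕ,
      ((-1) ^ n * σ ^ (2 * n) * q ^ (n * (n - 1)) / qGamma q (2 * n + γ + 1)) * x ^ n



namespace QML
open PowerSeries Finset

noncomputable def theta (f : ℝ⟦X⟧) : ℝ⟦X⟧ := PowerSeries.mk (fun n => (n : ℝ) * coeff n f)

lemma coeff_theta (f : ℝ⟦X⟧) (n : ℕ) : coeff n (theta f) = (n : ℝ) * coeff n f := by
  simp [theta]

lemma theta_eq (f : ℝ⟦X⟧) : theta f = X * derivative ℝ f := by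
  ext n
  rw [coeff_theta]
  cases n with
  | zero => simp
  | succ n => rw [coeff_succ_X_mul, coeff_derivative]; push_cast; ring

lemma theta_mul (f g : ℝ⟦X⟧) : theta (f * g) = theta f * g + f * theta g := by
  simp only [theta_eq, Derivation.leibniz, smul_eq_mul]; ring

lemma theta_one : theta 1 = 0 := by simp [theta_eq]

lemma theta_add (f g : ℝ⟦X⟧) : theta (f + g) = theta f + theta g := by
  simp only [theta_eq, map_add]; ring

lemma theta_rescale (a : ℝ) (f : ℝ⟦X⟧) : theta (rescale a f) = rescale a (theta f) := by
  ext n; simp only [coeff_theta, coeff_rescale]; ring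

noncomputable def logS (h : ℝ⟦X⟧) : ℝ⟦X⟧ := -(theta h) * h⁻¹

lemma ne0 {h : ℝ⟦X⟧} (h0 : coeff 0 h = 1) : constantCoeff h ≠ 0 := by
  rw [← coeff_zero_eq_constantCoeff_apply, h0]; exact one_ne_zero

lemma logS_mul {h : ℝ⟦X⟧} (h0 : coeff 0 h = 1) : logS h * h = -theta h := by
  rw [logS, mul_assoc, PowerSeries.inv_mul_cancel _ (ne0 h0), mul_one]

lemma logS_zero (h : ℝ⟦X⟧) : coeff 0 (logS h) = 0 := by
  rw [logS, coeff_mul]; simp [coeff_theta]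

lemma logS_one {h : ℝ⟦X⟧} (h0 : coeff 0 h = 1) : coeff 1 (logS h) = - coeff 1 h := by
  have := congrArg (coeff 1) (logS_mul h0)
  rw [coeff_mul, Finset.Nat.antidiagonal_succ] at this
  simp only [coeff_theta, map_neg] at this
  simp [logS_zero] at this
  have h0' : constantCoeff h = 1 := by simpa using h0
  have h1 : constantCoeff (logS h) = 0 := by simpa using logS_zero h
  rw [h0'] at this
  linarith

lemma inv_nonneg_coeff {h : ℝ⟦X⟧} (h0 : coeff 0 h = 1) (hs : ∀ n, 0 ≤ coeff n (logS h)) :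
    ∀ n, 0 ≤ coeff n h⁻¹ := by
  have e1 : h * h⁻¹ = 1 := PowerSeries.mul_inv_cancel _ (ne0 h0)
  have e2 : theta h⁻¹ = logS h * h⁻¹ := by
    have := congrArg theta e1
    rw [theta_mul, theta_one] at this
    rw [logS]
    linear_combination h⁻¹ * this - theta h⁻¹ * e1
  intro n
  induction n using Nat.strong_induction_on with
  | _ n ih =>
    rcases Nat.eq_zero_or_pos n with rfl | hn
    · have := h0
      simp at this
      simp [this]
    · have := congrArg (coeff n) e2
      rw [coeff_theta, coeff_mul] at this
      have hsum : 0 ≤ ∑ p ∈ antidiagonal n, coeff p.1 (logS h) * coeff p.2 h⁻¹ := by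
        refine Finset.sum_nonneg ?_
        rintro ⟨i, j⟩ hij
        rw [HasAntidiagonal.mem_antidiagonal] at hij
        simp only at hij ⊢
        rcases Nat.eq_zero_or_pos i with rfl | hi
        · rw [logS_zero]; simp
        · exact mul_nonneg (hs i) (ih j (by omega))
      rw [← this] at hsum
      have hn' : (0 : ℝ) < n := by exact_mod_cast hn
      exact nonneg_of_mul_nonneg_right hsum hn'

/-- The homogeneous (Hahn–Exton) case. -/
lemma logS_nonneg_case1 {h : ℝ⟦X⟧} (h0 : coeff 0 h = 1) {Q d t : ℝ} (ht : 0 < t) (hQ0 : 0 < Q) (hQ1 : Q < 1)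
    (hd : 0 < d) (hdQ : ∀ n : ℕ, 1 ≤ n → d * Q ^ n < 1)
    (heq : h = (1 + C d - C t * X) * rescale Q h - C d * rescale Q (rescale Q h)) :
    ∀ n, 0 ≤ coeff n (logS h) := by
  have e1 : h * h⁻¹ = 1 := PowerSeries.mul_inv_cancel _ (ne0 h0)
  obtain ⟨M, hM⟩ : ∃ M, M = rescale Q h * h⁻¹ := ⟨_, rfl⟩
  obtain ⟨B, hB⟩ : ∃ B, B = C t * X + C d * (rescale Q M - 1) := ⟨_, rfl⟩
  have e1R : rescale Q h * rescale Q h⁻¹ = 1 := by rw [← map_mul, e1, map_one]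
  have eRM : rescale Q M = rescale Q (rescale Q h) * rescale Q h⁻¹ := by rw [hM, map_mul]
  have hMB : M = 1 + M * B := by
    rw [hB, eRM, hM]
    linear_combination (-h⁻¹) * heq + e1 +
      (-C d * h⁻¹ * rescale Q (rescale Q h)) * e1R
  have m0 : coeff 0 M = 1 := by
    have h0' : constantCoeff h = 1 := by simpa using h0
    rw [hM, coeff_mul]; simp [h0']
  have hBc : ∀ j, coeff j B = t * (if j = 1 then 1 else 0) + d * (Q ^ j * coeff j M - if j = 0 then 1 else 0) := by
    intro j
    rw [hB]
    simp [coeff_X, coeff_rescale, coeff_C_mul, coeff_one]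
  have B0 : coeff 0 B = 0 := by rw [hBc, m0]; simp
  have hBn : ∀ j, 0 ≤ coeff j M → 0 ≤ coeff j B := by
    intro j hj
    rcases Nat.eq_zero_or_pos j with rfl | hj0
    · rw [B0]
    · rw [hBc]
      have : j ≠ 0 := by omega
      rw [if_neg this]
      have : 0 ≤ d * (Q ^ j * coeff j M - 0) := by rw [sub_zero]; positivity
      split_ifs <;> simp only [mul_one, mul_zero] <;> linarith
  have hMn : ∀ n, 0 ≤ coeff n M := by
    intro n
    induction n using Nat.strong_induction_on with
    | _ n ih =>
      cases n with
      | zero => rw [m0]; exact zero_le_one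
      | succ n =>
        have := congrArg (coeff (n+1)) hMB
        rw [map_add, coeff_mul, Finset.Nat.antidiagonal_succ, Finset.sum_cons, Finset.sum_map] at this
        have hrest : 0 ≤ ∑ x ∈ antidiagonal n, coeff (x.1+1) M * coeff x.2 B := by
          refine Finset.sum_nonneg ?_
          rintro ⟨i, j⟩ hij
          rw [HasAntidiagonal.mem_antidiagonal] at hij
          simp only at hij ⊢
          rcases Nat.eq_zero_or_pos j with rfl | hj
          · rw [B0]; simp
          · exact mul_nonneg (ih _ (by omega)) (hBn j (ih _ (by omega)))
        have hb := hBc (n+1)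
        rw [if_neg (Nat.succ_ne_zero n)] at hb
        simp [m0, coeff_one] at this
        have m0' : constantCoeff M = 1 := by simpa using m0
        rw [hb] at this
        have h1 : (0:ℝ) ≤ t * if n + 1 = 1 then 1 else 0 := by split_ifs <;> simp [ht.le]
        have h2 := hdQ (n+1) (by omega)
        have h3 : 0 ≤ (1 - d * Q^(n+1)) * coeff (n+1) M := by nlinarith
        exact nonneg_of_mul_nonneg_right h3 (by linarith)
  have e3 : theta M = M * theta B + theta M * B := by
    conv_lhs => rw [hMB]
    rw [theta_add, theta_one, theta_mul]; ring
  have e4 : theta M = M * M * theta B := by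
    linear_combination (M) * e3 - theta M * hMB
  have hs := logS_mul h0
  have hsR := congrArg (rescale Q) hs
  rw [map_mul, map_neg, ← theta_rescale] at hsR
  have hMh : M * h = rescale Q h := by rw [hM]; linear_combination rescale Q h * e1
  have e5 := congrArg theta hMh
  rw [theta_mul] at e5
  have hne : h ≠ 0 := by rintro rfl; simp at h0
  have hMne : M ≠ 0 := by rintro rfl; simp at hMB
  have e6 : logS h - rescale Q (logS h) = M * theta B := by
    apply mul_left_cancel₀ hMne
    apply mul_right_cancel₀ hne
    linear_combination M * hs - hsR - rescale Q (logS h) * hMh + h * e4 - e5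
  intro n
  rcases Nat.eq_zero_or_pos n with rfl | hn
  · rw [logS_zero]
  · have := congrArg (coeff n) e6
    rw [map_sub, coeff_rescale, coeff_mul] at this
    have hsum : 0 ≤ ∑ p ∈ antidiagonal n, coeff p.1 M * coeff p.2 (theta B) := by
      refine Finset.sum_nonneg fun p _ => mul_nonneg (hMn _) ?_
      rw [coeff_theta]
      exact mul_nonneg (Nat.cast_nonneg _) (hBn _ (hMn _))
    rw [← this] at hsum
    have h3 : 0 ≤ (1 - Q^n) * coeff n (logS h) := by linarith
    exact nonneg_of_mul_nonneg_right h3 (by linarith [pow_lt_one₀ hQ0.le hQ1 (by omega : n ≠ 0)])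

lemma alt_bound (m : ℕ) : ∀ t : ℕ → ℝ, (∀ i, 0 ≤ t i) → (∀ i, t (i+1) ≤ t i) →
    0 ≤ ∑ i ∈ range m, (-1)^i * t i ∧ ∑ i ∈ range m, (-1)^i * t i ≤ t 0 := by
  induction m with
  | zero => intro t h _; simp [h]
  | succ m ih =>
    intro t h1 h2
    have := ih (fun i => t (i+1)) (fun i => h1 _) (fun i => h2 _)
    rw [Finset.sum_range_succ']
    have e : ∑ i ∈ range m, (-1:ℝ)^(i+1) * t (i+1) = - ∑ i ∈ range m, (-1)^i * t (i+1) := by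
      rw [← Finset.sum_neg_distrib]; refine Finset.sum_congr rfl fun i _ => ?_; ring
    rw [e]
    simp only [pow_zero, one_mul]
    have := h2 0
    constructor <;> simp only [zero_add] at * <;> linarith

/-- The Hutchinson case. -/
lemma logS_nonneg_case2 {h : ℝ⟦X⟧} (b : ℕ → ℝ) (hb : ∀ n, coeff n h = (-1)^n * b n)
    (b0 : b 0 = 1) (bpos : ∀ n, 0 < b n)
    (hr : ∀ n, 4 * (b (n+2) * b n) ≤ b (n+1) ^ 2) :
    ∀ n, 0 ≤ coeff n (logS h) := by
  have h0 : coeff 0 h = 1 := by rw [hb, b0]; simp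
  obtain ⟨s, hsdef⟩ : ∃ s : ℕ → ℝ, s = fun n => coeff n (logS h) := ⟨_, rfl⟩
  have s0 : s 0 = 0 := by rw [hsdef]; exact logS_zero h
  have s1 : s 1 = b 1 := by rw [hsdef]; simp only; rw [logS_one h0, hb]; ring
  have hb' : ∀ k, 4^k * b (k+1) ≤ b 1 * b k := by
    intro k
    induction k with
    | zero => simp [b0]
    | succ k ih =>
      have := hr k
      have h1 := bpos k
      have h2 := bpos (k+1)
      have h3 := bpos 1
      have : (4^(k+1) * b (k+2)) * b k ≤ (b 1 * b (k+1)) * b k := by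
        have e : (4^(k+1) * b (k+2)) * b k = 4^k * (4 * (b (k+2) * b k)) := by ring
        rw [e]
        calc _ ≤ 4^k * b (k+1)^2 := by gcongr
          _ = (4^k * b (k+1)) * b (k+1) := by ring
          _ ≤ (b 1 * b k) * b (k+1) := by gcongr
          _ = _ := by ring
      exact le_of_mul_le_mul_right this h1
  -- Newton
  have newton : ∀ n, s (n+1) = ∑ i ∈ range (n+1), (-1)^i *
      (if i = n then ((n:ℝ)+1) * b (n+1) else b (i+1) * s (n - i)) := by
    intro n
    have := congrArg (coeff (n+1)) (logS_mul h0)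
    rw [mul_comm, coeff_mul, Finset.Nat.sum_antidiagonal_eq_sum_range_succ_mk, Finset.sum_range_succ',
      map_neg, coeff_theta] at this
    simp only [hb, b0, Nat.add_sub_add_right, Nat.sub_zero, pow_zero, one_mul] at this
    rw [Finset.sum_range_succ] at this ⊢
    have e : ∑ i ∈ range n, (-1:ℝ)^i * (if i = n then ((n:ℝ)+1) * b (n+1) else b (i+1) * s (n - i))
       = - ∑ k ∈ range n, (-1) ^ (k + 1) * b (k + 1) * (coeff (n - k)) (logS h) := by
      rw [← Finset.sum_neg_distrib]
      refine Finset.sum_congr rfl fun i hi => ?_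
      rw [if_neg (by rw [mem_range] at hi; omega), hsdef]; ring
    rw [e, if_pos rfl]
    rw [Nat.sub_self, logS_zero] at this
    push_cast at this
    have e2 : s (n+1) = coeff (n+1) (logS h) := by rw [hsdef]
    rw [e2]
    linear_combination this
  have key : ∀ n, (∀ k, 1 ≤ k → k ≤ n + 1 → 0 < s k) ∧
      (∀ k, 1 ≤ k → k ≤ n → b 1 * s k ≤ 2 * s (k+1)) := by
    intro n
    induction n with
    | zero => exact ⟨fun k h1 h2 => by rw [show k = 1 by omega, s1]; exact bpos 1,
        fun k h1 h2 => by omega⟩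
    | succ n ih =>
      obtain ⟨hpos, hstep⟩ := ih
      obtain ⟨t, ht⟩ : ∃ t : ℕ → ℝ, t = fun i => if n + 1 < i then 0 else
        if i = n + 1 then ((n:ℝ)+2) * b (n+2) else b (i+1) * s (n + 1 - i) := ⟨_, rfl⟩
      have tpos : ∀ i, 0 ≤ t i := by
        intro i
        rw [ht]
        simp only
        split_ifs with h1 h2
        · exact le_rfl
        · have := bpos (n+2); positivity
        · exact mul_nonneg (bpos _).le (hpos _ (by omega) (by omega)).le
      have thalf : ∀ i, 2 * t (i+1) ≤ t i := by
        intro i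
        rcases lt_trichotomy i n with hi | hi | hi
        · have e1 : t (i+1) = b (i+2) * s (n - i) := by
            rw [ht]; simp only
            rw [if_neg (by omega), if_neg (by omega), show n + 1 - (i+1) = n - i by omega]
          have e2 : t i = b (i+1) * s (n - i + 1) := by
            rw [ht]; simp only
            rw [if_neg (by omega), if_neg (by omega), show n + 1 - i = n - i + 1 by omega]
          rw [e1, e2]
          have h1 := hb' (i+1)
          have h2 := hstep (n-i) (by omega) (by omega)
          have h3 : (4:ℝ) ≤ 4^(i+1) := by
            have : (1:ℝ) ≤ 4^i := one_le_pow₀ (by norm_num)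
            rw [pow_succ]; linarith
          have h4 : 0 < s (n-i) := hpos _ (by omega) (by omega)
          have p1 := bpos (i+1)
          have p2 := bpos (i+2)
          have h5 : 4 * b (i+2) ≤ b 1 * b (i+1) := by
            refine le_trans ?_ h1
            gcongr
          calc 2 * (b (i+2) * s (n-i)) = (4 * b (i+2)) * s (n-i) / 2 := by ring
            _ ≤ (b 1 * b (i+1)) * s (n-i) / 2 := by gcongr
            _ = b (i+1) * (b 1 * s (n-i)) / 2 := by ring
            _ ≤ b (i+1) * (2 * s (n-i+1)) / 2 := by gcongr
            _ = _ := by ring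
        · subst hi
          have e1 : t (i+1) = ((i:ℝ)+2) * b (i+2) := by
            rw [ht]; simp
          have e2 : t i = b (i+1) * b 1 := by
            rw [ht]; simp only
            rw [if_neg (by omega), if_neg (by omega), show i + 1 - i = 1 by omega, s1]
          rw [e1, e2]
          have h1 := hb' (i+1)
          have h3 : 2 * ((i:ℝ) + 2) ≤ 4^(i+1) := by
            clear * -
            induction i with
            | zero => norm_num
            | succ i ih => push_cast; rw [pow_succ]; nlinarith [(Nat.cast_nonneg i : (0:ℝ) ≤ i)]
          have p2 := bpos (i+2)
          calc 2 * (((i:ℝ)+2) * b (i+2)) = (2 * ((i:ℝ)+2)) * b (i+2) := by ring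
            _ ≤ 4^(i+1) * b (i+2) := by gcongr
            _ ≤ _ := by rw [mul_comm (b (i+1))]; exact h1
        · have e1 : t (i+1) = 0 := by
            rw [ht]; simp only
            rw [if_pos (by omega)]
          rw [e1]; simpa using tpos i
      have t0 : t 0 = b 1 * s (n+1) := by
        rw [ht]; simp
      have hsn : s (n+2) = ∑ i ∈ range (n+2), (-1)^i * t i := by
        rw [newton (n+1)]
        refine Finset.sum_congr rfl fun i hi => ?_
        rw [mem_range] at hi
        rw [ht]; simp only
        rw [if_neg (by omega : ¬ n + 1 < i)]
        push_cast
        congr 1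
        split_ifs <;> ring
      have hlow : t 0 - t 1 ≤ s (n+2) := by
        rw [hsn, Finset.sum_range_succ']
        have e : ∑ i ∈ range (n+1), (-1:ℝ)^(i+1) * t (i+1) = - ∑ i ∈ range (n+1), (-1)^i * t (i+1) := by
          rw [← Finset.sum_neg_distrib]; refine Finset.sum_congr rfl fun i _ => ?_; ring
        rw [e]
        have := (alt_bound (n+1) (fun i => t (i+1)) (fun i => tpos _)
          (fun i => by linarith [thalf (i+1), tpos (i+1+1)])).2
        simp only [zero_add] at this
        simp only [pow_zero, one_mul]
        linarith
      have hnew : b 1 * s (n+1) ≤ 2 * s (n+2) := by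
        rw [← t0]; linarith [thalf 0]
      have hnewpos : 0 < s (n+2) := by
        have := mul_pos (bpos 1) (hpos (n+1) (by omega) le_rfl)
        linarith
      refine ⟨fun k h1 h2 => ?_, fun k h1 h2 => ?_⟩
      · rcases Nat.lt_or_ge k (n+2) with h | h
        · exact hpos k h1 (by omega)
        · rw [show k = n + 2 by omega]; exact hnewpos
      · rcases Nat.lt_or_ge k (n+1) with h | h
        · exact hstep k h1 (by omega)
        · rw [show k = n + 1 by omega]; exact hnew
  intro n
  have : coeff n (logS h) = s n := by rw [hsdef]
  rw [this]
  cases n with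
  | zero => rw [s0]
  | succ n => exact ((key n).1 (n+1) (by omega) le_rfl).le
end QML


namespace QML
open PowerSeries Finset

noncomputable def Hc (h : ℝ⟦X⟧) (w : ℂ) : ℂ := ∑' n : ℕ, ((coeff n h : ℝ) : ℂ) * w ^ n
noncomputable def Hr (h : ℝ⟦X⟧) (x : ℝ) : ℝ := ∑' n : ℕ, coeff n h * x ^ n

def Ent (h : ℝ⟦X⟧) : Prop := ∀ w : ℂ, Summable (fun n : ℕ => ((coeff n h : ℝ) : ℂ) * w ^ n)

lemma Hc_ofReal (h : ℝ⟦X⟧) (x : ℝ) : Hc h x = (Hr h x : ℂ) := by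
  rw [Hc, Hr, Complex.ofReal_tsum]; push_cast; rfl

lemma Hc_zero {h : ℝ⟦X⟧} (h0 : coeff 0 h = 1) : Hc h 0 = 1 := by
  rw [Hc, tsum_eq_single 0]
  · rw [h0]; simp
  · intro n hn; simp [hn]

lemma Hr_zero {h : ℝ⟦X⟧} (h0 : coeff 0 h = 1) : Hr h 0 = 1 := by
  have := Hc_ofReal h 0
  rw [Complex.ofReal_zero, Hc_zero h0] at this
  exact_mod_cast this.symm

lemma Hc_bound (h : ℝ⟦X⟧) (R : ℝ) (i : ℕ) (w : ℂ) (hw : w ∈ Metric.ball (0:ℂ) R) :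
    ‖((coeff i h : ℝ) : ℂ) * w ^ i‖ ≤ ‖((coeff i h : ℝ) : ℂ) * (R:ℂ) ^ i‖ := by
  rw [norm_mul, norm_mul, norm_pow, norm_pow]
  rw [mem_ball_zero_iff] at hw
  have : ‖w‖ ≤ ‖(R:ℂ)‖ := by
    rw [Complex.norm_real]; exact hw.le.trans (le_abs_self R)
  gcongr

lemma Hc_diff {h : ℝ⟦X⟧} (he : Ent h) : Differentiable ℂ (Hc h) := by
  intro w
  have := Complex.differentiableOn_tsum_of_summable_norm (U := Metric.ball (0:ℂ) (‖w‖+1))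
    (F := fun n w => ((coeff n h : ℝ) : ℂ) * w ^ n) (he ((‖w‖+1 : ℝ) : ℂ)).norm
    (fun i => by fun_prop) Metric.isOpen_ball (fun i w hw => Hc_bound h _ i w hw)
  exact this.differentiableAt (Metric.isOpen_ball.mem_nhds (by simp))

lemma Hc_hasSum {h : ℝ⟦X⟧} (he : Ent h) (w : ℂ) :
    HasSum (fun n : ℕ => ((coeff n h : ℝ) : ℂ) * w ^ n) (Hc h w) := (he w).hasSum

lemma theta_hasSum {h : ℝ⟦X⟧} (he : Ent h) (w : ℂ) :
    HasSum (fun n : ℕ => ((coeff n (theta h) : ℝ) : ℂ) * w ^ n) (w * deriv (Hc h) w) := by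
  have := Complex.hasSum_deriv_of_summable_norm (U := Metric.ball (0:ℂ) (‖w‖+1)) (z := w)
    (F := fun n w => ((coeff n h : ℝ) : ℂ) * w ^ n) (he ((‖w‖+1 : ℝ) : ℂ)).norm
    (fun i => by fun_prop) Metric.isOpen_ball (fun i w hw => Hc_bound h _ i w hw) (by simp)
  have h2 := this.mul_left w
  refine h2.congr_fun ?_ |> id
  intro n
  rw [coeff_theta]
  simp only [deriv_const_mul_field, deriv_pow_field]
  cases n with
  | zero => simp
  | succ n => push_cast; simp [pow_succ]; ring

lemma mul_hasSum {a b : ℕ → ℂ} {w A B : ℂ} (ha : HasSum (fun n => a n * w ^ n) A)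
    (hb : HasSum (fun n => b n * w ^ n) B) :
    HasSum (fun n => (∑ p ∈ HasAntidiagonal.antidiagonal n, a p.1 * b p.2) * w ^ n) (A * B) := by
  have h1 := ha.summable.norm
  have h2 := hb.summable.norm
  have h3 := (summable_norm_sum_mul_antidiagonal_of_summable_norm h1 h2).of_norm.hasSum
  rw [← tsum_mul_tsum_eq_tsum_sum_antidiagonal_of_summable_norm h1 h2, ha.tsum_eq, hb.tsum_eq] at h3
  refine h3.congr_fun ?_ |> id
  intro n
  rw [Finset.sum_mul]
  refine Finset.sum_congr rfl ?_
  rintro ⟨i, j⟩ hij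
  rw [HasAntidiagonal.mem_antidiagonal] at hij
  simp only at hij ⊢
  rw [← hij, pow_add]; ring

lemma unique {a b : ℕ → ℂ} {f : ℂ → ℂ} {R : ℝ} (hR : 0 < R)
    (ha : ∀ w, ‖w‖ < R → HasSum (fun n => a n * w ^ n) (f w))
    (hb : ∀ w, ‖w‖ < R → HasSum (fun n => b n * w ^ n) (f w)) : a = b := by
  have key : ∀ c : ℕ → ℂ, (∀ w, ‖w‖ < R → HasSum (fun n => c n * w ^ n) (f w)) →
      HasFPowerSeriesAt f (FormalMultilinearSeries.ofScalars ℂ c) 0 := by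
    intro c hc
    rw [hasFPowerSeriesAt_iff]
    filter_upwards [Metric.ball_mem_nhds (0:ℂ) hR] with w hw
    rw [mem_ball_zero_iff] at hw
    have := hc w hw
    rw [zero_add]
    simpa [FormalMultilinearSeries.coeff_ofScalars, mul_comm] using this
  have := (key a ha).eq_formalMultilinearSeries (key b hb)
  exact FormalMultilinearSeries.ofScalars_series_injective (𝕜 := ℂ) ℂ this

lemma inv_hasSum {h : ℝ⟦X⟧} (h0 : coeff 0 h = 1) (he : Ent h) {R : ℝ} (hR : 0 < R)
    (hne : ∀ w : ℂ, ‖w‖ < R → Hc h w ≠ 0) (w : ℂ) (hw : ‖w‖ < R) :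
    HasSum (fun n : ℕ => ((coeff n h⁻¹ : ℝ) : ℂ) * w ^ n) (Hc h w)⁻¹ := by
  obtain ⟨p, hp⟩ : ∃ p : ℕ → ℂ, ∀ w, ‖w‖ < R → HasSum (fun n => p n * w ^ n) (Hc h w)⁻¹ := by
    refine ⟨fun n => (n.factorial : ℂ)⁻¹ * iteratedDeriv n (fun w => (Hc h w)⁻¹) 0, fun w hw => ?_⟩
    have hd : DifferentiableOn ℂ (fun w => (Hc h w)⁻¹) (Metric.ball 0 R) := by
      refine DifferentiableOn.inv (Hc_diff he).differentiableOn ?_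
      intro w hw
      exact hne w (by simpa using hw)
    have := Complex.hasSum_taylorSeries_on_ball hd (z := w) (by simpa using hw)
    refine this.congr_fun ?_ |> id
    intro n
    simp only [smul_eq_mul, sub_zero]; ring
  have h1 : ∀ w, ‖w‖ < R → HasSum (fun n => (∑ q ∈ HasAntidiagonal.antidiagonal n,
      ((coeff q.1 h : ℝ) : ℂ) * p q.2) * w ^ n) ((fun _ => (1:ℂ)) w) := by
    intro w hw
    have := mul_hasSum (Hc_hasSum he w) (hp w hw)
    rwa [mul_inv_cancel₀ (hne w hw)] at this
  have h2 : ∀ w : ℂ, ‖w‖ < R → HasSum (fun n => (if n = 0 then (1:ℂ) else 0) * w ^ n) ((fun _ => (1:ℂ)) w) := by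
    intro w _
    have := hasSum_single (f := fun n => (if n = 0 then (1:ℂ) else 0) * w ^ n) 0 (by
      intro n hn; simp [hn])
    simpa using this
  have h3 := unique hR h1 h2
  have h4 : (PowerSeries.map Complex.ofRealHom h) * PowerSeries.mk p = 1 := by
    ext n
    rw [coeff_mul, coeff_one]
    have := congrFun h3 n
    simpa using this
  have h5 : (PowerSeries.map Complex.ofRealHom h⁻¹) * (PowerSeries.map Complex.ofRealHom h) = 1 := by
    rw [← map_mul, PowerSeries.inv_mul_cancel _ (ne0 h0), map_one]
  have h6 : PowerSeries.mk p = PowerSeries.map Complex.ofRealHom h⁻¹ := by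
    linear_combination (PowerSeries.map Complex.ofRealHom h⁻¹) * h4 - PowerSeries.mk p * h5
  have h7 : ∀ n, p n = ((coeff n h⁻¹ : ℝ) : ℂ) := by
    intro n
    have := congrArg (coeff n) h6
    simpa using this
  simpa only [h7] using hp w hw

lemma logS_hasSum {h : ℝ⟦X⟧} (h0 : coeff 0 h = 1) (he : Ent h) {R : ℝ} (hR : 0 < R)
    (hne : ∀ w : ℂ, ‖w‖ < R → Hc h w ≠ 0) (w : ℂ) (hw : ‖w‖ < R) :
    HasSum (fun n : ℕ => ((coeff n (logS h) : ℝ) : ℂ) * w ^ n) (-(w * deriv (Hc h) w) / Hc h w) := by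
  have := (mul_hasSum (theta_hasSum he w) (inv_hasSum h0 he hR hne w hw)).neg
  rw [neg_div, div_eq_mul_inv]
  refine this.congr_fun ?_ |> id
  intro n
  rw [logS, neg_mul, map_neg, coeff_mul]
  push_cast
  ring

/-- A series with nonnegative coefficients is dominated by its value at the modulus. -/
lemma norm_le_of_nonneg {a : ℕ → ℝ} (ha : ∀ n, 0 ≤ a n) {w A : ℂ} {B : ℝ}
    (h1 : HasSum (fun n => (a n : ℂ) * w ^ n) A)
    (h2 : HasSum (fun n => (a n : ℂ) * ((‖w‖ : ℝ) : ℂ) ^ n) (B : ℂ)) : ‖A‖ ≤ B := by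
  have h3 : HasSum (fun n => a n * ‖w‖ ^ n) B := by
    have := Complex.hasSum_re h2
    simpa [← Complex.ofReal_pow, ← Complex.ofReal_mul] using this
  rw [← h1.tsum_eq]
  refine tsum_of_norm_bounded h3 fun n => ?_
  rw [norm_mul, norm_pow, Complex.norm_real, Real.norm_of_nonneg (ha n)]

lemma Hr_deriv {h : ℝ⟦X⟧} (he : Ent h) (x : ℝ) : HasDerivAt (Hr h) (deriv (Hc h) x).re x := by
  have := ((Hc_diff he) (x:ℂ)).hasDerivAt.real_of_complex
  simpa only [Hc_ofReal, Complex.ofReal_re] using this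

lemma Hc_deriv_ofReal {h : ℝ⟦X⟧} (he : Ent h) (x : ℝ) :
    deriv (Hc h) x = ((deriv (Hr h) x : ℝ) : ℂ) := by
  have h1 := ((Hc_diff he) (x:ℂ)).hasDerivAt.comp_ofReal
  simp only [Hc_ofReal] at h1
  have h2 := (Hr_deriv he x).ofReal_comp
  rw [(Hr_deriv he x).deriv]
  exact h1.unique h2

lemma nonvanish {h : ℝ⟦X⟧} (h0 : coeff 0 h = 1) (he : Ent h)
    (hs : ∀ n, 0 ≤ coeff n (logS h)) {W : ℝ} (hW : 0 ≤ W)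
    (hpos : ∀ x, 0 ≤ x → x ≤ W → 0 < Hr h x) : ∀ w : ℂ, ‖w‖ ≤ W → Hc h w ≠ 0 := by
  by_contra! hcon
  obtain ⟨w0, hw0, hz0⟩ := hcon
  have hcont : Continuous (Hc h) := (Hc_diff he).continuous
  have hcompact : IsCompact (Metric.closedBall (0:ℂ) W ∩ (Hc h) ⁻¹' {0}) :=
    (isCompact_closedBall _ _).inter_right (isClosed_singleton.preimage hcont)
  obtain ⟨ζ, ⟨hζ1, hζ2⟩, hmin⟩ := hcompact.exists_isMinOn
    ⟨w0, by simpa using hw0, by simpa using hz0⟩ (continuous_norm.continuousOn)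
  have hζW : ‖ζ‖ ≤ W := by simpa using hζ1
  have hζz : Hc h ζ = 0 := by simpa using hζ2
  have hρ : 0 < ‖ζ‖ := by
    rw [norm_pos_iff]; rintro rfl
    rw [Hc_zero h0] at hζz; exact one_ne_zero hζz
  have hne : ∀ w : ℂ, ‖w‖ < ‖ζ‖ → Hc h w ≠ 0 := by
    intro w hw hz
    have := hmin (a := w) ⟨by simpa using hw.le.trans hζW, by simpa using hz⟩
    exact absurd hw (not_lt.mpr this)
  have hrc : ContinuousOn (Hr h) (Set.Icc 0 W) := fun x _ => (Hr_deriv he x).continuousAt.continuousWithinAt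
  obtain ⟨x0, hx0, hx0min⟩ := isCompact_Icc.exists_isMinOn (Set.nonempty_Icc.mpr hW) hrc
  have hm : 0 < Hr h x0 := hpos x0 hx0.1 hx0.2
  have hlow : Metric.ball (0:ℂ) ‖ζ‖ ⊆ {w | Hr h x0 ≤ ‖Hc h w‖} := by
    intro w hw
    have hw' : ‖w‖ < ‖ζ‖ := by simpa using hw
    have e1 := inv_hasSum h0 he hρ hne w hw'
    have e2 := inv_hasSum h0 he hρ hne ((‖w‖:ℝ):ℂ) (by simpa using hw')
    rw [Hc_ofReal, ← Complex.ofReal_inv] at e2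
    have e3 := norm_le_of_nonneg (inv_nonneg_coeff h0 hs) e1 e2
    have e4 : Hr h x0 ≤ Hr h ‖w‖ := hx0min (a := ‖w‖) ⟨norm_nonneg _, by linarith⟩
    rw [norm_inv] at e3
    have e5 : 0 < ‖Hc h w‖ := norm_pos_iff.mpr (hne w hw')
    exact e4.trans ((inv_le_inv₀ e5 (by linarith)).mp e3)
  have hcl : IsClosed {w | Hr h x0 ≤ ‖Hc h w‖} := isClosed_le continuous_const hcont.norm
  have := (hcl.closure_subset_iff.mpr hlow)
  rw [closure_ball _ hρ.ne'] at this
  have h9 : Hr h x0 ≤ ‖Hc h ζ‖ := this (by simp)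
  rw [hζz, norm_zero] at h9
  linarith

lemma u_bound {h : ℝ⟦X⟧} (h0 : coeff 0 h = 1) (he : Ent h)
    (hs : ∀ n, 0 ≤ coeff n (logS h)) {W : ℝ} (hW : 0 < W)
    (hpos : ∀ x, 0 ≤ x → x ≤ W → 0 < Hr h x) (w : ℂ) (hw : ‖w‖ < W) :
    ‖-(w * deriv (Hc h) w) / Hc h w‖ ≤ -(‖w‖ * deriv (Hr h) ‖w‖) / Hr h ‖w‖ := by
  have hne : ∀ w : ℂ, ‖w‖ < W → Hc h w ≠ 0 := fun w hw => nonvanish h0 he hs hW.le hpos w hw.le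
  have e1 := logS_hasSum h0 he hW hne w hw
  have e2 := logS_hasSum h0 he hW hne ((‖w‖:ℝ):ℂ) (by simpa using hw)
  refine norm_le_of_nonneg hs e1 ?_
  rw [Hc_ofReal, Hc_deriv_ofReal he] at e2
  exact_mod_cast e2

lemma u_lower {h : ℝ⟦X⟧} (h0 : coeff 0 h = 1) (he : Ent h)
    (hs : ∀ n, 0 ≤ coeff n (logS h)) {W : ℝ} (hW : 0 < W)
    (hpos : ∀ x, 0 ≤ x → x ≤ W → 0 < Hr h x) (x : ℝ) (hx0 : 0 ≤ x) (hx : x < W) :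
    - coeff 1 h * x ≤ -(x * deriv (Hr h) x) / Hr h x := by
  have hne : ∀ w : ℂ, ‖w‖ < W → Hc h w ≠ 0 := fun w hw => nonvanish h0 he hs hW.le hpos w hw.le
  have e2 := logS_hasSum h0 he hW hne (x:ℂ) (by simpa [abs_of_nonneg hx0] using hx)
  rw [Hc_ofReal, Hc_deriv_ofReal he] at e2
  have h3 : HasSum (fun n => coeff n (logS h) * x ^ n) (-(x * deriv (Hr h) x) / Hr h x) := by
    exact_mod_cast e2
  have := le_hasSum h3 1 (fun n _ => mul_nonneg (hs n) (pow_nonneg hx0 n))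
  rwa [logS_one h0, pow_one] at this

/-- If `β H + x H' > 0` on `(0,W)` then `H > 0` on `[0,W]`. -/
lemma Hr_pos {h : ℝ⟦X⟧} (h0 : coeff 0 h = 1) (he : Ent h) {β W : ℝ} (hβ : 0 < β)
    (hK : ∀ x, 0 < x → x < W → 0 < β * Hr h x + x * deriv (Hr h) x) :
    ∀ x, 0 ≤ x → x ≤ W → 0 < Hr h x := by
  intro x hx0 hxW
  rcases hx0.eq_or_lt with rfl | hx
  · rw [Hr_zero h0]; exact one_pos
  have hc : Continuous (Hr h) := continuous_iff_continuousAt.mpr fun x => (Hr_deriv he x).continuousAt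
  have hmono : StrictMonoOn (fun x : ℝ => x ^ β * Hr h x) (Set.Icc 0 W) := by
    refine strictMonoOn_of_deriv_pos (convex_Icc 0 W) ?_ ?_
    · exact ((Real.continuous_rpow_const hβ.le).mul hc).continuousOn
    · intro y hy
      rw [interior_Icc] at hy
      have d1 := Real.hasDerivAt_rpow_const (x := y) (p := β) (Or.inl hy.1.ne')
      have d2 := Hr_deriv he y
      rw [← d2.deriv] at d2
      have d3 := (d1.mul d2).deriv
      have e : deriv (fun x : ℝ => x ^ β * Hr h x) y = y ^ (β - 1) * (β * Hr h y + y * deriv (Hr h) y) := by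
        refine d3.trans ?_
        have : y ^ β = y ^ (β - 1) * y := by
          rw [Real.rpow_sub_one hy.1.ne']; field_simp [hy.1.ne']
        rw [this]; ring
      rw [e]
      exact mul_pos (Real.rpow_pos_of_pos hy.1 _) (hK y hy.1 hy.2)
  have := hmono (a := 0) (b := x) ⟨le_rfl, hx.le.trans hxW⟩ ⟨hx.le, hxW⟩ hx
  simp only [Real.zero_rpow hβ.ne', zero_mul] at this
  exact (mul_pos_iff_of_pos_left (Real.rpow_pos_of_pos hx _)).mp this

end QML

namespace QML
open PowerSeries Finset

lemma core_root {h : ℝ⟦X⟧} (h0 : coeff 0 h = 1) (h1 : coeff 1 h < 0) (he : Ent h)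
    (hs : ∀ n, 0 ≤ coeff n (logS h)) {β : ℝ} (hβ : 0 < β) :
    ∃ w0 : ℝ, 0 < w0 ∧ β * Hr h w0 + w0 * deriv (Hr h) w0 = 0 ∧
      ∀ x, 0 < x → x < w0 → 0 < β * Hr h x + x * deriv (Hr h) x := by
  obtain ⟨K, hKdef⟩ : ∃ K : ℝ → ℝ, K = fun x => β * Hr h x + x * deriv (Hr h) x := ⟨_, rfl⟩
  have hc : Continuous (Hr h) := continuous_iff_continuousAt.mpr fun x => (Hr_deriv he x).continuousAt
  have hc' : Continuous (deriv (Hr h)) := by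
    have : deriv (Hr h) = fun x : ℝ => (deriv (Hc h) x).re := by
      ext x; exact (Hr_deriv he x).deriv
    rw [this]
    have h2 : Continuous (deriv (Hc h)) := ((Hc_diff he).contDiff (n := 1)).continuous_deriv le_rfl
    exact Complex.continuous_re.comp (h2.comp Complex.continuous_ofReal)
  have hKc : Continuous K := by rw [hKdef]; fun_prop
  have hK0 : 0 < K 0 := by rw [hKdef]; simp [Hr_zero h0, hβ]
  -- `K` takes a nonpositive value somewhere
  obtain ⟨x1, hx1, hKx1⟩ : ∃ x, 0 < x ∧ K x ≤ 0 := by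
    by_contra! hcon
    have hx : 0 < β / (- coeff 1 h) := div_pos hβ (by linarith)
    set x := β / (- coeff 1 h) with hxdef
    have hpos := Hr_pos h0 he (W := x + 1) hβ (fun y hy _ => by
      have := hcon y hy; rw [hKdef] at this; exact this)
    have e1 := u_lower h0 he hs (by linarith) hpos x hx.le (by linarith)
    have e2 : - coeff 1 h * x = β := by
      rw [hxdef]; field_simp [h1.ne]
    have e3 := hpos x hx.le (by linarith)
    rw [e2, le_div_iff₀ e3] at e1
    have := hcon x hx
    rw [hKdef] at this
    simp only at this
    linarith
  obtain ⟨z, hz, hKz⟩ : ∃ z ∈ Set.Icc 0 x1, K z = 0 :=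
    intermediate_value_Icc' hx1.le hKc.continuousOn ⟨hKx1, hK0.le⟩
  have hcomp : IsCompact (Set.Icc 0 x1 ∩ K ⁻¹' {0}) :=
    isCompact_Icc.inter_right (isClosed_singleton.preimage hKc)
  obtain ⟨w0, ⟨hw0, hKw0⟩, hleast⟩ := hcomp.exists_isLeast ⟨z, hz, hKz⟩
  have hKw0' : K w0 = 0 := hKw0
  have hw0pos : 0 < w0 := by
    rcases hw0.1.eq_or_lt with h | h
    · rw [← h] at hKw0'; linarith
    · exact h
  refine ⟨w0, hw0pos, by rw [hKdef] at hKw0'; exact hKw0', fun x hx hxw => ?_⟩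
  suffices 0 < K x by rw [hKdef] at this; exact this
  by_contra! hneg
  obtain ⟨y, hy, hKy⟩ : ∃ y ∈ Set.Icc 0 x, K y = 0 :=
    intermediate_value_Icc' hx.le hKc.continuousOn ⟨hneg, hK0.le⟩
  have := hleast ⟨⟨hy.1, hy.2.trans (hxw.le.trans hw0.2)⟩, hKy⟩
  linarith [hy.2]

lemma final_core {h : ℝ⟦X⟧} (h0 : coeff 0 h = 1) (h1 : coeff 1 h < 0) (he : Ent h)
    (hs : ∀ n, 0 ≤ coeff n (logS h)) {α a0 : ℝ} (hα1 : α < 1) (ha0 : a0 ≠ 0)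
    {L : ℝ → ℝ} {g : ℂ → ℂ} (hL : ∀ x, L x = a0 * Hr h (x^2)) (hg : ∀ z, g z = z * Hc h (z^2)) :
    ∃ y : ℝ, IsLeast {r : ℝ | 0 < r ∧ r * deriv L r - (α - 1) * L r = 0} y ∧
      radiusStarlike α g = y := by
  have hβ : 0 < (1 - α) / 2 := by linarith
  obtain ⟨w0, hw0, hKw0, hK⟩ := core_root h0 h1 he hs hβ
  have hpos := Hr_pos h0 he hβ hK
  have hLd : ∀ r, r * deriv L r - (α - 1) * L r =
      2 * a0 * ((1 - α) / 2 * Hr h (r^2) + r^2 * deriv (Hr h) (r^2)) := by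
    intro r
    have hL' : L = fun x => a0 * Hr h (x^2) := funext hL
    have d1 := Hr_deriv he (r^2)
    rw [← d1.deriv] at d1
    have d2 : HasDerivAt (fun x : ℝ => x^2) (2 * r) r := by simpa using hasDerivAt_pow 2 r
    have d3 := ((HasDerivAt.comp (h₂ := Hr h) (h := fun x : ℝ => x^2) r d1 d2).const_mul a0)
    have d4 : HasDerivAt L (a0 * (deriv (Hr h) (r^2) * (2 * r))) r := by rw [hL']; exact d3
    rw [d4.deriv, hL r]; ring
  have hgd : ∀ z : ℂ, z ≠ 0 → Hc h (z^2) ≠ 0 →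
      z * deriv g z / g z = 1 - 2 * (-(z^2 * deriv (Hc h) (z^2)) / Hc h (z^2)) := by
    intro z hz hne
    have hg' : g = fun z => z * Hc h (z^2) := funext hg
    have d1 := (Hc_diff he (z^2)).hasDerivAt
    have d2 : HasDerivAt (fun x : ℂ => x^2) (2 * z) z := by simpa using hasDerivAt_pow 2 z
    have d3 := (hasDerivAt_id z).mul (d1.comp z d2)
    have d4 : HasDerivAt g (1 * Hc h (z^2) + z * (deriv (Hc h) (z^2) * (2 * z))) z := by
      rw [hg']; exact d3
    rw [d4.deriv, hg z]; field_simp; ring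
  have hy : 0 < Real.sqrt w0 := Real.sqrt_pos.mpr hw0
  have hysq : Real.sqrt w0 ^ 2 = w0 := Real.sq_sqrt hw0.le
  refine ⟨Real.sqrt w0, ⟨⟨hy, ?_⟩, ?_⟩, ?_⟩
  · rw [hLd, hysq, hKw0, mul_zero]
  · rintro r ⟨hr, hr2⟩
    rw [hLd] at hr2
    by_contra! hlt
    have h3 : r^2 < w0 := by rw [← hysq]; gcongr
    have := hK (r^2) (by positivity) h3
    rcases mul_eq_zero.mp hr2 with h | h
    · exact ha0 (by linarith)
    · linarith
  · refine IsGreatest.csSup_eq ⟨⟨hy, ?_⟩, ?_⟩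
    · intro z hz hzy
      have hz0 : z ≠ 0 := norm_pos_iff.mp hz
      have hzw : ‖z^2‖ < w0 := by rw [norm_pow, ← hysq]; gcongr
      have hne : Hc h (z^2) ≠ 0 := nonvanish h0 he hs hw0.le hpos _ hzw.le
      rw [hgd z hz0 hne]
      have hb := u_bound h0 he hs hw0 hpos (z^2) hzw
      have hx0 : 0 < ‖z^2‖ := norm_pos_iff.mpr (pow_ne_zero 2 hz0)
      have hK' := hK ‖z^2‖ hx0 hzw
      have hHp := hpos ‖z^2‖ hx0.le hzw.le
      have h5 : -(‖z^2‖ * deriv (Hr h) ‖z^2‖) / Hr h ‖z^2‖ < (1 - α) / 2 := by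
        rw [div_lt_iff₀ hHp]; linarith
      have h6 := Complex.re_le_norm (-(z^2 * deriv (Hc h) (z^2)) / Hc h (z^2))
      have h7 : (1 - 2 * (-(z^2 * deriv (Hc h) (z^2)) / Hc h (z^2))).re
          = 1 - 2 * (-(z^2 * deriv (Hc h) (z^2)) / Hc h (z^2)).re := by
        simp only [Complex.sub_re, Complex.one_re, Complex.mul_re, Complex.re_ofNat, Complex.im_ofNat,
          zero_mul, sub_zero]
      rw [h7]; linarith
    · rintro r ⟨hr, hr2⟩
      by_contra! hlt
      have h3 := hr2 ((Real.sqrt w0 : ℝ) : ℂ) (by simpa using hy.ne')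
        (by rw [Complex.norm_real, Real.norm_of_nonneg hy.le]; exact hlt)
      have hHp := hpos w0 hw0.le le_rfl
      have e : ((Real.sqrt w0 : ℝ) : ℂ)^2 = ((w0 : ℝ) : ℂ) := by
        rw [← Complex.ofReal_pow, hysq]
      rw [hgd _ (by exact_mod_cast hy.ne') (by
        rw [e, Hc_ofReal]; exact_mod_cast hHp.ne'), e, Hc_ofReal, Hc_deriv_ofReal he] at h3
      have h4 : -(w0 * deriv (Hr h) w0) / Hr h w0 = (1 - α)/2 := by
        rw [div_eq_iff hHp.ne']; linarith
      have h5 : (1 - 2 * (-((w0:ℂ) * ((deriv (Hr h) w0 : ℝ) : ℂ)) / ((Hr h w0 : ℝ) : ℂ)))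
          = ((1 - 2 * (-(w0 * deriv (Hr h) w0) / Hr h w0) : ℝ) : ℂ) := by push_cast; rfl
      rw [h5, Complex.ofReal_re, h4] at h3
      linarith

/-! q-gamma -/

lemma poch_summable {q : ℝ} (hq0 : 0 < q) (hq1 : q < 1) (a : ℝ) :
    Summable (fun k : ℕ => ‖-(a * q ^ k)‖) := by
  have := (summable_geometric_of_lt_one hq0.le hq1).mul_left a
  exact this.neg.norm

lemma poch_ne {q : ℝ} (hq0 : 0 < q) (hq1 : q < 1) {a : ℝ} (ha1 : a < 1) :
    qPochInf a q ≠ 0 := by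
  have := tprod_one_add_ne_zero_of_summable (f := fun k : ℕ => -(a * q ^ k)) (fun k => by
    have h1 : q^k ≤ 1 := pow_le_one₀ hq0.le hq1.le
    have h2 : 0 < q^k := pow_pos hq0 k
    have : a * q^k < 1 := by nlinarith
    linarith) (poch_summable hq0 hq1 a)
  simpa only [qPochInf, sub_eq_add_neg] using this

lemma poch_rec {q : ℝ} (hq0 : 0 < q) (hq1 : q < 1) (a : ℝ) :
    qPochInf a q = (1 - a) * qPochInf (a * q) q := by
  have hm := multipliable_one_add_of_summable (poch_summable hq0 hq1 (a * q))
  have := tprod_eq_zero_mul' (f := fun k : ℕ => 1 - a * q ^ k) (by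
    refine hm.congr fun k => ?_
    ring)
  rw [qPochInf, this, qPochInf]
  simp only [pow_zero, mul_one]
  congr 1
  refine tprod_congr fun k => ?_
  ring

lemma qGamma_ne {q : ℝ} (hq0 : 0 < q) (hq1 : q < 1) {x : ℝ} (hx : 0 < x) : qGamma q x ≠ 0 := by
  rw [qGamma]
  refine div_ne_zero (mul_ne_zero (poch_ne hq0 hq1 hq1) ?_) (poch_ne hq0 hq1 ?_)
  · exact (Real.rpow_pos_of_pos (by linarith) _).ne'
  · exact Real.rpow_lt_one hq0.le hq1 hx

lemma qGamma_rec {q : ℝ} (hq0 : 0 < q) (hq1 : q < 1) {x : ℝ} (hx : 0 < x) :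
    (1 - q) * qGamma q (x + 1) = (1 - q ^ x) * qGamma q x := by
  have h1 := poch_rec hq0 hq1 (q ^ x)
  have h2 : q ^ x * q = q ^ (x + 1) := by rw [Real.rpow_add hq0, Real.rpow_one]
  have h3 : (1 - q) ^ (1 - x) = (1 - q) * (1 - q) ^ (1 - (x + 1)) := by
    rw [show 1 - x = 1 + (1 - (x+1)) by ring, Real.rpow_add (by linarith), Real.rpow_one]
  have hlt : q ^ x < 1 := Real.rpow_lt_one hq0.le hq1 hx
  have n1 : qPochInf (q ^ (x+1)) q ≠ 0 := poch_ne hq0 hq1 (Real.rpow_lt_one hq0.le hq1 (by linarith))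
  have n2 : (1 - q ^ x) ≠ 0 := by linarith
  rw [qGamma, qGamma, h1, h2, h3]
  field_simp

/-- normalized coefficients -/
noncomputable def bc (γ σ q : ℝ) (n : ℕ) : ℝ :=
  σ ^ (2 * n) * q ^ (n * (n - 1)) * qGamma q (γ + 1) / qGamma q (2 * n + γ + 1)

noncomputable def hc (γ σ q : ℝ) : ℝ⟦X⟧ := PowerSeries.mk fun n => (-1) ^ n * bc γ σ q n

section
variable {γ σ q : ℝ} (hq0 : 0 < q) (hq1 : q < 1) (hσ : 0 < σ) (hγ0 : 0 ≤ γ)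
include hq0 hq1 hγ0

lemma bc_zero : bc γ σ q 0 = 1 := by
  have := qGamma_ne hq0 hq1 (x := γ + 1) (by linarith)
  simp [bc, this]

lemma den_pos (n : ℕ) (j : ℕ) : q ^ (2 * (n:ℝ) + γ + (j + 1)) ≤ q ∧ 0 < q ^ (2 * (n:ℝ) + γ + (j + 1)) := by
  refine ⟨?_, Real.rpow_pos_of_pos hq0 _⟩
  have := Real.rpow_le_rpow_of_exponent_ge hq0 hq1.le (show (1:ℝ) ≤ 2 * (n:ℝ) + γ + (j + 1) by
    have : (0:ℝ) ≤ n := Nat.cast_nonneg n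
    have : (0:ℝ) ≤ j := Nat.cast_nonneg j
    linarith)
  rwa [Real.rpow_one] at this

lemma bc_rec (n : ℕ) : bc γ σ q (n+1) *
    ((1 - q ^ (2 * (n:ℝ) + γ + 1)) * (1 - q ^ (2 * (n:ℝ) + γ + 2))) =
      σ ^ 2 * (1 - q) ^ 2 * q ^ (2 * n) * bc γ σ q n := by
  have hn : (0:ℝ) ≤ n := Nat.cast_nonneg n
  have r1 := qGamma_rec hq0 hq1 (x := 2 * (n:ℝ) + γ + 1) (by linarith)
  have r2 := qGamma_rec hq0 hq1 (x := 2 * (n:ℝ) + γ + 2) (by linarith)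
  rw [show 2 * (n:ℝ) + γ + 1 + 1 = 2 * (n:ℝ) + γ + 2 by ring] at r1
  have n1 := qGamma_ne hq0 hq1 (x := 2 * (n:ℝ) + γ + 1) (by linarith)
  have n2 := qGamma_ne hq0 hq1 (x := 2 * (n:ℝ) + γ + 2 + 1) (by linarith)
  have e : (n+1) * (n + 1 - 1) = n * (n - 1) + 2 * n := by
    cases n with
    | zero => simp
    | succ m => simp; ring
  rw [bc, bc, e]
  push_cast
  rw [show 2 * ((n:ℝ) + 1) + γ + 1 = 2 * (n:ℝ) + γ + 2 + 1 by ring]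
  generalize qGamma q (2 * (n:ℝ) + γ + 2 + 1) = G3 at *
  generalize qGamma q (2 * (n:ℝ) + γ + 2) = G2 at *
  generalize qGamma q (2 * (n:ℝ) + γ + 1) = G1 at *
  generalize q ^ (2 * (n:ℝ) + γ + 1) = x at *
  generalize q ^ (2 * (n:ℝ) + γ + 2) = y at *
  have key : (1 - q)^2 * G3 = (1 - x) * (1 - y) * G1 := by
    linear_combination (1 - q) * r2 + (1 - y) * r1
  field_simp
  rw [pow_add]
  linear_combination (- σ^(2*n) * σ^2 * q ^ (n * (n-1)) * q^(2*n) * qGamma q (γ+1)) * key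

include hσ
lemma bc_pos (n : ℕ) : 0 < bc γ σ q n := by
  induction n with
  | zero => rw [bc_zero hq0 hq1 hγ0]; exact one_pos
  | succ n ih =>
    have r := bc_rec (σ := σ) hq0 hq1 hγ0 n
    have d1 := den_pos hq0 hq1 hγ0 n 0
    have d2 := den_pos hq0 hq1 hγ0 n 1
    norm_num at d1 d2
    have hp : 0 < (1 - q ^ (2 * (n:ℝ) + γ + 1)) * (1 - q ^ (2 * (n:ℝ) + γ + 2)) :=
      mul_pos (by linarith) (by linarith)
    have h1q : 0 < 1 - q := by linarith
    have : 0 < σ ^ 2 * (1 - q) ^ 2 * q ^ (2 * n) * bc γ σ q n := by positivity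
    rw [← r] at this
    exact pos_of_mul_pos_left this hp.le

lemma bc_le (n : ℕ) : bc γ σ q (n+1) ≤ σ ^ 2 * q ^ (2 * n) * bc γ σ q n := by
  have r := bc_rec (σ := σ) hq0 hq1 hγ0 n
  have d1 := den_pos hq0 hq1 hγ0 n 0
  have d2 := den_pos hq0 hq1 hγ0 n 1
  norm_num at d1 d2
  have h1q : 0 < 1 - q := by linarith
  have hp : (1 - q)^2 ≤ (1 - q ^ (2 * (n:ℝ) + γ + 1)) * (1 - q ^ (2 * (n:ℝ) + γ + 2)) := by
    rw [sq]
    exact mul_le_mul (by linarith) (by linarith) (by linarith) (by linarith)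
  have h2 := mul_le_mul_of_nonneg_left hp (bc_pos hq0 hq1 hσ hγ0 (n+1)).le
  rw [r] at h2
  have h3 : bc γ σ q (n+1) * (1-q)^2 ≤ (σ ^ 2 * q ^ (2 * n) * bc γ σ q n) * (1-q)^2 := by
    refine h2.trans (le_of_eq (by ring))
  exact le_of_mul_le_mul_right h3 (by positivity)

lemma hc_ent : Ent (hc γ σ q) := by
  intro w
  have hlim : Filter.Tendsto (fun n : ℕ => σ^2 * ‖w‖ * (q^2)^n) Filter.atTop (nhds (σ^2 * ‖w‖ * 0)) :=
    (tendsto_pow_atTop_nhds_zero_of_lt_one (by positivity) (by nlinarith)).const_mul _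
  rw [mul_zero] at hlim
  refine summable_of_ratio_norm_eventually_le (r := 1/2) (by norm_num) ?_
  filter_upwards [hlim.eventually_le_const (show (0:ℝ) < 1/2 by norm_num)] with n hn
  have p0 := bc_pos hq0 hq1 hσ hγ0 n
  have p1 := bc_pos hq0 hq1 hσ hγ0 (n+1)
  have hle := bc_le hq0 hq1 hσ hγ0 n
  have hnorm : ∀ m, ‖((coeff m (hc γ σ q) : ℝ) : ℂ) * w ^ m‖ = bc γ σ q m * ‖w‖^m := by
    intro m
    rw [norm_mul, norm_pow, Complex.norm_real, hc, coeff_mk, norm_mul, norm_pow, norm_neg, norm_one,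
      one_pow, one_mul, Real.norm_of_nonneg (bc_pos hq0 hq1 hσ hγ0 m).le]
  rw [hnorm, hnorm]
  calc bc γ σ q (n+1) * ‖w‖^(n+1) ≤ (σ ^ 2 * q ^ (2 * n) * bc γ σ q n) * ‖w‖^(n+1) := by gcongr
    _ = (σ^2 * ‖w‖ * (q^2)^n) * (bc γ σ q n * ‖w‖^n) := by rw [← pow_mul, pow_succ]; ring
    _ ≤ _ := by gcongr

lemma logS_case1 {d : ℝ} (hd : 0 < d) (hdQ : ∀ n : ℕ, 1 ≤ n → d * (q^2) ^ n < 1)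
    (hfac : ∀ n : ℕ, (1 - q ^ (2 * (n:ℝ) + γ + 1)) * (1 - q ^ (2 * (n:ℝ) + γ + 2)) =
      (1 - (q^2)^(n+1)) * (1 - d * (q^2)^(n+1))) :
    ∀ n, 0 ≤ coeff n (logS (hc γ σ q)) := by
  have h1q : 0 < 1 - q := by linarith
  refine logS_nonneg_case1 (Q := q^2) (d := d) (t := σ^2 * (1-q)^2) ?_ (by positivity)
    (by positivity) (by nlinarith) hd hdQ ?_
  · rw [hc, coeff_mk, bc_zero hq0 hq1 hγ0]; simp
  · ext n
    cases n with
    | zero =>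
      simp [hc, bc_zero hq0 hq1 hγ0]
      rw [← coeff_zero_eq_constantCoeff_apply, ← coeff_zero_eq_constantCoeff_apply, coeff_rescale,
        coeff_rescale, coeff_rescale, coeff_mk, bc_zero hq0 hq1 hγ0]
      simp
    | succ n =>
      have r := bc_rec (σ := σ) hq0 hq1 hγ0 n
      rw [hfac] at r
      rw [show (1 + C d - C (σ^2 * (1-q)^2) * X) * rescale (q^2) (hc γ σ q) =
        rescale (q^2) (hc γ σ q) + C d * rescale (q^2) (hc γ σ q) -
          C (σ^2 * (1-q)^2) * (X * rescale (q^2) (hc γ σ q)) by ring]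
      rw [map_sub, map_sub, map_add, coeff_C_mul, coeff_C_mul, coeff_C_mul, coeff_succ_X_mul]
      simp only [coeff_rescale, hc, coeff_mk]
      rw [pow_succ (-1:ℝ)]
      rw [pow_mul] at r
      linear_combination (-(-1)^n) * r

lemma logS_case2 (hq2 : q ≤ 1/2) : ∀ n, 0 ≤ coeff n (logS (hc γ σ q)) := by
  refine logS_nonneg_case2 (bc γ σ q) (fun n => by rw [hc, coeff_mk]) (bc_zero hq0 hq1 hγ0)
    (bc_pos hq0 hq1 hσ hγ0) ?_
  intro n
  have r0 := bc_rec (σ := σ) hq0 hq1 hγ0 n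
  have r1 := bc_rec (σ := σ) hq0 hq1 hγ0 (n+1)
  have d1 := den_pos hq0 hq1 hγ0 n 0
  have d2 := den_pos hq0 hq1 hγ0 n 1
  norm_num at d1 d2
  have a1 : q ^ (2 * ((n+1:ℕ):ℝ) + γ + 1) ≤ q ^ (2 * (n:ℝ) + γ + 1) :=
    Real.rpow_le_rpow_of_exponent_ge hq0 hq1.le (by push_cast; linarith)
  have a2 : q ^ (2 * ((n+1:ℕ):ℝ) + γ + 2) ≤ q ^ (2 * (n:ℝ) + γ + 2) :=
    Real.rpow_le_rpow_of_exponent_ge hq0 hq1.le (by push_cast; linarith)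
  have p0 := bc_pos hq0 hq1 hσ hγ0 n
  have p1 := bc_pos hq0 hq1 hσ hγ0 (n+1)
  have p2 := bc_pos hq0 hq1 hσ hγ0 (n+2)
  obtain ⟨D0, hD0⟩ : ∃ D, D = (1 - q ^ (2 * (n:ℝ) + γ + 1)) * (1 - q ^ (2 * (n:ℝ) + γ + 2)) := ⟨_, rfl⟩
  obtain ⟨D1, hD1⟩ : ∃ D, D = (1 - q ^ (2 * ((n+1:ℕ):ℝ) + γ + 1)) * (1 - q ^ (2 * ((n+1:ℕ):ℝ) + γ + 2)) :=
    ⟨_, rfl⟩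
  have hD0p : 0 < D0 := by rw [hD0]; exact mul_pos (by linarith) (by linarith)
  have hDD : D0 ≤ D1 := by
    rw [hD0, hD1]; exact mul_le_mul (by linarith) (by linarith) (by linarith) (by linarith)
  rw [← hD0] at r0
  rw [← hD1] at r1
  have hT : 0 < σ ^ 2 * (1 - q) ^ 2 * q ^ (2 * n) := by
    have h1q : 0 < 1 - q := by linarith
    positivity
  obtain ⟨T, hTd⟩ : ∃ T, T = σ ^ 2 * (1 - q) ^ 2 * q ^ (2 * n) := ⟨_, rfl⟩
  rw [← hTd] at r0 hT
  have r1' : bc γ σ q (n+2) * D1 = T * q^2 * bc γ σ q (n+1) := by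
    rw [show bc γ σ q (n+2) = bc γ σ q (n+1+1) from rfl, r1, hTd]; ring
  have hq4 : 4 * q^2 ≤ 1 := by nlinarith
  have : (4 * (bc γ σ q (n+2) * bc γ σ q n)) * (T * D1) ≤ (bc γ σ q (n+1))^2 * (T * D1) := by
    calc (4 * (bc γ σ q (n+2) * bc γ σ q n)) * (T * D1)
        = 4 * (bc γ σ q (n+2) * D1) * (T * bc γ σ q n) := by ring
      _ = (4 * q^2) * (T * bc γ σ q (n+1)^2 * D0) := by rw [r1', ← r0]; ring
      _ ≤ 1 * (T * bc γ σ q (n+1)^2 * D0) := by gcongr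
      _ ≤ 1 * (T * bc γ σ q (n+1)^2 * D1) := by gcongr
      _ = _ := by ring
  exact le_of_mul_le_mul_right this (mul_pos hT (by linarith))

end
end QML

open QML PowerSeries in
theorem stmt7 (q σ γ : ℝ) (hq0 : 0 < q) (hq1 : q < 1) (hσ : 0 < σ)
    (hγ0 : 0 ≤ γ) (hγ2 : γ < 2) (hR : condR q γ)
    (α : ℝ) (hα0 : 0 ≤ α) (hα1 : α < 1) :
    ∃ y : ℝ,
      IsLeast {r : ℝ | 0 < r ∧
        r * deriv (qMLR γ σ q) r - (α - 1) * qMLR γ σ q r = 0} y ∧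
      radiusStarlike α (gML γ σ q) = y := by
  have hG := qGamma_ne hq0 hq1 (x := γ + 1) (by linarith)
  have hs : ∀ n, 0 ≤ coeff n (logS (hc γ σ q)) := by
    have hrp : ∀ m : ℕ, q ^ ((m:ℕ):ℝ) = q ^ m := fun m => Real.rpow_natCast q m
    rcases hR with (h | h) | ⟨h1, h2, h3⟩
    · subst h
      refine logS_case1 hq0 hq1 hσ hγ0 (d := q⁻¹) (by positivity) ?_ ?_
      · intro n hn
        obtain ⟨m, rfl⟩ : ∃ m, n = m + 1 := ⟨n - 1, by omega⟩
        have : q⁻¹ * (q^2)^(m+1) = q ^ (2 * m + 1) := by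
          rw [← pow_mul]; field_simp; ring
        rw [this]; exact pow_lt_one₀ hq0.le hq1 (by omega)
      · intro n
        rw [show 2 * (n:ℝ) + 0 + 1 = ((2*n+1 : ℕ):ℝ) by push_cast; ring,
          show 2 * (n:ℝ) + 0 + 2 = ((2*n+2 : ℕ):ℝ) by push_cast; ring, hrp, hrp]
        have e : q⁻¹ * (q^2)^(n+1) = q ^ (2 * n + 1) := by
          rw [← pow_mul]; field_simp; ring
        rw [e, ← pow_mul]; ring
    · subst h
      refine logS_case1 hq0 hq1 hσ hγ0 (d := q) hq0 ?_ ?_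
      · intro n hn
        have : q * (q^2)^n = q ^ (2 * n + 1) := by
          rw [← pow_mul]; ring
        rw [this]; exact pow_lt_one₀ hq0.le hq1 (by omega)
      · intro n
        rw [show 2 * (n:ℝ) + 1 + 1 = ((2*n+2 : ℕ):ℝ) by push_cast; ring,
          show 2 * (n:ℝ) + 1 + 2 = ((2*n+3 : ℕ):ℝ) by push_cast; ring, hrp, hrp]
        rw [← pow_mul]; ring
    · refine logS_case2 hq0 hq1 hσ hγ0 ?_
      have x1 : 0 < q ^ (γ + 1) := Real.rpow_pos_of_pos hq0 _
      have x2 : 0 < q ^ (γ + 2) := Real.rpow_pos_of_pos hq0 _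
      have y1 : q ^ (γ + 1) < 1 := Real.rpow_lt_one hq0.le hq1 (by linarith)
      have y2 : q ^ (γ + 2) < 1 := Real.rpow_lt_one hq0.le hq1 (by linarith)
      have hA : (1 - q ^ (γ + 1)) * (1 - q ^ (γ + 2)) ≤ 1 := by
        nlinarith
      have hB : (1 - q) * ((1 - q ^ (γ + 1)) * (1 - q ^ (γ + 2))) ≤ 1 - q :=
        mul_le_of_le_one_right (by linarith) hA
      have hC : q * 1 < q * (q⁻¹ * (1 - q) * (1 - q ^ (γ + 1)) * (1 - q ^ (γ + 2))) :=
        mul_lt_mul_of_pos_left h3 hq0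
      have hD : q * (q⁻¹ * (1 - q) * (1 - q ^ (γ + 1)) * (1 - q ^ (γ + 2))) =
          (1 - q) * ((1 - q ^ (γ + 1)) * (1 - q ^ (γ + 2))) := by
        field_simp
      linarith
  have h0 : coeff 0 (hc γ σ q) = 1 := by
    rw [hc, coeff_mk, bc_zero hq0 hq1 hγ0]; simp
  have h1 : coeff 1 (hc γ σ q) < 0 := by
    rw [hc, coeff_mk]; linarith [bc_pos hq0 hq1 hσ hγ0 1]
  have hco : ∀ n : ℕ, (-1) ^ n * σ ^ (2 * n) * q ^ (n * (n - 1)) / qGamma q (2 * n + γ + 1) =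
      (qGamma q (γ + 1))⁻¹ * coeff n (hc γ σ q) := by
    intro n
    rw [hc, coeff_mk, bc]; field_simp
  refine final_core h0 h1 (hc_ent hq0 hq1 hσ hγ0) hs hα1 (a0 := (qGamma q (γ + 1))⁻¹)
    (inv_ne_zero hG) ?_ ?_
  · intro x
    rw [qMLR, Hr, ← tsum_mul_left]
    refine tsum_congr fun n => ?_
    rw [hco, pow_mul]; ring
  · intro z
    have : qML γ σ q z = ((qGamma q (γ + 1) : ℝ) : ℂ)⁻¹ * Hc (hc γ σ q) (z^2) := by
      rw [qML, Hc, ← tsum_mul_left]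
      refine tsum_congr fun n => ?_
      rw [hco, pow_mul]; push_cast; ring
    have hG' : ((qGamma q (γ + 1) : ℝ) : ℂ) ≠ 0 := by exact_mod_cast hG
    rw [gML, this]; field_simp
end

section
/- Assume condition (R) and let α∈[0,1). Then the radius of starlikeness of order α of h_{γ,σ}(·;q) equals the smallest positive root z_{γ,σ,1}(q) of the equation √r·λ_{γ,σ}'(√r;q) − 2(α−1)·λ_{γ,σ}(√r;q) = 0 (derivative with respect to the real variable). -/
/-- log-derivative has nonneg coefficients -/
def PL (a : ℕ → ℝ) : Prop :=
  ∃ p : ℕ → ℝ, (∀ n, 0 ≤ p n) ∧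
    ∀ n : ℕ, ((n : ℝ) + 1) * a (n + 1) = - ∑ ij ∈ Finset.HasAntidiagonal.antidiagonal n, p ij.1 * a ij.2

def PLS (F : PowerSeries ℝ) : Prop :=
  ∃ P : PowerSeries ℝ, (∀ n, 0 ≤ PowerSeries.coeff n P) ∧
    PowerSeries.derivative ℝ F = - (P * F)

theorem PLS.mul {F G : PowerSeries ℝ} (hF : PLS F) (hG : PLS G) : PLS (F * G) := by
  obtain ⟨P, hP, h1⟩ := hF
  obtain ⟨Q, hQ, h2⟩ := hG
  refine ⟨P + Q, fun n => ?_, ?_⟩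
  · rw [map_add]; exact add_nonneg (hP n) (hQ n)
  · rw [Derivation.leibniz, h1, h2]
    simp only [smul_eq_mul]; ring

theorem PLS.one : PLS 1 := ⟨0, by simp, by simp⟩

theorem PLS.lin {t : ℝ} (ht : 0 ≤ t) : PLS (1 - PowerSeries.C t * PowerSeries.X) := by
  refine ⟨PowerSeries.mk (fun n => t ^ (n + 1)), fun n => ?_, ?_⟩
  · rw [PowerSeries.coeff_mk]; positivity
  · ext n
    rw [PowerSeries.coeff_derivative, map_neg, mul_sub, mul_one, map_sub, ← mul_assoc,
      map_sub]
    rcases n with _ | n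
    · simp [PowerSeries.coeff_one]
    · simp only [PowerSeries.coeff_succ_mul_X, PowerSeries.coeff_mul_C, PowerSeries.coeff_mk,
        PowerSeries.coeff_C]
      simp [PowerSeries.coeff_one]
      ring

theorem PLS.prod (y : ℕ → ℝ) (N : ℕ) (hy : ∀ k < N, 0 ≤ y k) :
    PLS (∏ k ∈ Finset.range N, (1 - PowerSeries.C (y k) * PowerSeries.X)) := by
  induction N with
  | zero => simpa using PLS.one
  | succ n ih =>
    rw [Finset.prod_range_succ]
    exact (ih fun k hk => hy k (by omega)).mul (PLS.lin (hy n (by omega)))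

theorem PLS.toPL {F : PowerSeries ℝ} (hF : PLS F) : PL (fun n => PowerSeries.coeff n F) := by
  obtain ⟨P, hP, h⟩ := hF
  refine ⟨fun n => PowerSeries.coeff n P, hP, fun n => ?_⟩
  have := congrArg (PowerSeries.coeff n) h
  rw [PowerSeries.coeff_derivative, map_neg, PowerSeries.coeff_mul] at this
  rw [← this]; ring

theorem PL.poly (y : ℕ → ℝ) (N : ℕ) (hy : ∀ k < N, 0 < y k) :
    PL (fun n => (∏ k ∈ Finset.range N, (1 - Polynomial.C (y k)⁻¹ * Polynomial.X)).coeff n) := by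
  have h := (PLS.prod (fun k => (y k)⁻¹) N (fun k hk => (inv_pos.2 (hy k hk)).le)).toPL
  convert h using 2 with n
  rw [← Polynomial.coeff_coe]
  congr 1
  rw [← Polynomial.coeToPowerSeries.ringHom_apply, map_prod]
  simp

theorem PL.scale {a : ℕ → ℝ} (h : PL a) (s c : ℝ) (hs : 0 ≤ s) : PL (fun n => c * s ^ n * a n) := by
  obtain ⟨p, hp, h⟩ := h
  refine ⟨fun n => s ^ (n + 1) * p n, fun n => mul_nonneg (by positivity) (hp n), fun n => ?_⟩
  have e : ((n : ℝ) + 1) * (c * s ^ (n + 1) * a (n + 1)) = c * s ^ (n+1) * (((n : ℝ) + 1) * a (n + 1)) := by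
    ring
  simp only []
  rw [e, h n, mul_neg, Finset.mul_sum]
  congr 1
  apply Finset.sum_congr rfl
  intro ij hij
  rw [Finset.HasAntidiagonal.mem_antidiagonal] at hij
  rw [← hij]; ring

open Filter Topology in
theorem PL.lim {a : ℕ → ℕ → ℝ} {b : ℕ → ℝ} (h : ∀ m, PL (a m))
    (hl : ∀ n, Tendsto (fun m => a m n) atTop (𝓝 (b n))) (ha : ∀ m, a m 0 = 1) : PL b := by
  choose p hp h using h
  have hb : b 0 = 1 := tendsto_nhds_unique (hl 0) (by simp [ha])
  have key : ∀ n, ∃ l, Tendsto (fun m => p m n) atTop (𝓝 l) := by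
    intro n
    induction n using Nat.strong_induction_on with
    | _ n ih =>
    choose! l hl' using ih
    have e : ∀ m, p m n = -(((n : ℝ) + 1) * a m (n + 1)) - ∑ k ∈ Finset.range n, p m k * a m (n - k) := by
      intro m
      rw [h m n, Finset.Nat.sum_antidiagonal_eq_sum_range_succ_mk, Finset.sum_range_succ]
      simp [ha]
    simp_rw [e]
    exact ⟨_, ((hl (n+1)).const_mul _).neg.sub (tendsto_finsetSum _ fun k hk =>
      (hl' k (Finset.mem_range.1 hk)).mul (hl (n - k)))⟩
  choose l hl' using key
  refine ⟨l, fun n => ge_of_tendsto' (hl' n) fun m => hp m n, fun n => ?_⟩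
  refine tendsto_nhds_unique ((hl (n+1)).const_mul _) ?_
  simp_rw [h]
  exact (tendsto_finsetSum _ fun k hk => (hl' k.1).mul (hl k.2)).neg

open Polynomial in
theorem factor (f : ℝ[X]) (N : ℕ) (hd : f.degree < ((N + 1 : ℕ) : WithBot ℕ)) (h0 : f.eval 0 = 1)
    (y : ℕ → ℝ) (hy : ∀ k < N, 0 < y k) (hlt : ∀ i j, i < j → j < N → y i < y j)
    (hz : ∀ k < N, f.eval (y k) = 0) :
    f = ∏ k ∈ Finset.range N, (1 - C (y k)⁻¹ * X) := by
  classical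
  have hinj : Set.InjOn y (Finset.range N : Set ℕ) := by
    intro i hi j hj hij
    simp only [Finset.coe_range, Set.mem_Iio] at hi hj
    rcases lt_trichotomy i j with h | h | h
    · exact absurd hij (hlt _ _ h hj).ne
    · exact h
    · exact absurd hij (hlt _ _ h hi).ne'
  have hnot : (0:ℝ) ∉ (Finset.range N).image y := by
    simp only [Finset.mem_image, Finset.mem_range, not_exists, not_and]
    intro k hk h
    exact (hy k hk).ne' h
  have hc : (insert (0:ℝ) ((Finset.range N).image y)).card = N + 1 := by
    rw [Finset.card_insert_of_notMem hnot, Finset.card_image_of_injOn hinj, Finset.card_range]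
  apply Polynomial.eq_of_degrees_lt_of_eval_finset_eq (insert (0:ℝ) ((Finset.range N).image y))
  · rw [hc]; exact hd
  · rw [hc]
    refine lt_of_le_of_lt (degree_prod_le _ _) ?_
    refine lt_of_le_of_lt (Finset.sum_le_card_nsmul _ _ 1 ?_) ?_
    · intro k hk
      refine (degree_sub_le _ _).trans (max_le (degree_one_le.trans (by norm_num)) (degree_C_mul_X_le _))
    · simp only [Finset.card_range, nsmul_eq_mul, mul_one]
      exact_mod_cast Nat.lt_succ_self N
  · intro x hx
    rw [eval_prod]
    rcases Finset.mem_insert.1 hx with rfl | hx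
    · simp [h0]
    · obtain ⟨k, hk, rfl⟩ := Finset.mem_image.1 hx
      rw [hz k (Finset.mem_range.1 hk)]
      symm
      apply Finset.prod_eq_zero hk
      have := (hy k (Finset.mem_range.1 hk)).ne'
      simp [this]

theorem ivt_sign (f : ℝ → ℝ) (hf : Continuous f) (k : ℕ) (l r : ℝ) (h : l ≤ r)
    (h1 : 0 ≤ (-1) ^ k * f l) (h2 : (-1) ^ k * f r ≤ 0) : ∃ y, l ≤ y ∧ y ≤ r ∧ f y = 0 := by
  have hc : Continuous (fun x => (-1) ^ k * f x) := by fun_prop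
  obtain ⟨y, hy, e⟩ := intermediate_value_Icc' h hc.continuousOn ⟨h2, h1⟩
  refine ⟨y, hy.1, hy.2, ?_⟩
  have : ((-1 : ℝ)) ^ k ≠ 0 := by simp
  simpa [this] using e

open Polynomial in
theorem sign_prod (N k : ℕ) (hk : k ≤ N) (x : ℕ → ℝ) (hx : ∀ i < N, 0 < x i) (t : ℝ)
    (h1 : ∀ i < k, x i ≤ t) (h2 : ∀ i, k ≤ i → i < N → t ≤ x i) :
    0 ≤ (-1) ^ k * (∏ i ∈ Finset.range N, (1 - C (x i)⁻¹ * X)).eval t := by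
  rw [eval_prod, ← Finset.prod_range_mul_prod_Ico _ hk, ← mul_assoc]
  apply mul_nonneg
  · have : ((-1 : ℝ)) ^ k = ∏ i ∈ Finset.range k, (-1) := by simp
    rw [this, ← Finset.prod_mul_distrib]
    apply Finset.prod_nonneg
    intro i hi
    have hi' := Finset.mem_range.1 hi
    have hp := hx i (by omega)
    have : 1 ≤ (x i)⁻¹ * t := by
      rw [inv_mul_eq_div, le_div_iff₀ hp]; linarith [h1 i hi']
    simp; linarith
  · apply Finset.prod_nonneg
    intro i hi
    have hi' := Finset.mem_Ico.1 hi
    have hp := hx i (by omega)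
    have : (x i)⁻¹ * t ≤ 1 := by
      rw [inv_mul_eq_div, div_le_iff₀ hp]; linarith [h2 i hi'.1 hi'.2]
    simp; linarith

open Polynomial in
theorem deg_prod (N : ℕ) (x : ℕ → ℝ) :
    (∏ i ∈ Finset.range N, (1 - C (x i)⁻¹ * X)).degree ≤ (N : WithBot ℕ) := by
  refine (degree_prod_le _ _).trans ?_
  refine (Finset.sum_le_card_nsmul _ _ 1 ?_).trans ?_
  · intro k hk
    refine (degree_sub_le _ _).trans (max_le (degree_one_le.trans (by norm_num)) (degree_C_mul_X_le _))
  · simp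

open Polynomial in
theorem case1_step (p c : ℝ) (hp0 : 0 < p) (hp1 : p < 1) (hc0 : 0 ≤ c) (hc1 : c < 1) (N : ℕ)
    (x : ℕ → ℝ) (hx : ∀ i < N, 0 < x i) (hs : ∀ i j, i < j → j < N → x i ≤ p * x j)
    (f : ℝ[X]) (hf : f = ∏ i ∈ Finset.range N, (1 - C (x i)⁻¹ * X)) :
    ∃ y : ℕ → ℝ, (∀ i < N, 0 < y i) ∧ (∀ i j, i < j → j < N → y i ≤ p * y j) ∧
      C (1 - c)⁻¹ * (f - C c * f.comp (C p * X)) = ∏ i ∈ Finset.range N, (1 - C (y i)⁻¹ * X) := by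
  set g := C (1 - c)⁻¹ * (f - C c * f.comp (C p * X)) with hg
  have hcpos : 0 < (1 - c)⁻¹ := inv_pos.2 (by linarith)
  have hge : ∀ t, g.eval t = (1 - c)⁻¹ * (f.eval t - c * f.eval (p * t)) := by
    intro t; simp [hg, eval_comp]
  have hf0 : f.eval 0 = 1 := by rw [hf, eval_prod]; simp
  have hg0 : g.eval 0 = 1 := by
    rw [hge, mul_zero, hf0]; field_simp
    have : 1 - c ≠ 0 := by linarith
    field_simp
  have hfx : ∀ i < N, f.eval (x i) = 0 := by
    intro i hi
    rw [hf, eval_prod]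
    apply Finset.prod_eq_zero (Finset.mem_range.2 hi)
    simp [(hx i hi).ne']
  have hlt : ∀ i j, i < j → j < N → x i < x j := by
    intro i j hij hj
    have := hs i j hij hj
    nlinarith [hx j hj]
  have hle : ∀ i j, i ≤ j → j < N → x i ≤ x j := by
    intro i j hij hj
    rcases hij.lt_or_eq with h | h
    · exact (hlt i j h hj).le
    · rw [h]
  have hsign : ∀ k ≤ N, ∀ t, (∀ i < k, x i ≤ t) → (∀ i, k ≤ i → i < N → t ≤ x i) →
      0 ≤ (-1) ^ k * f.eval t := by
    intro k hk t h1 h2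
    rw [hf]; exact sign_prod N k hk x hx t h1 h2
  have hright : ∀ k < N, (-1) ^ k * g.eval (x k) ≤ 0 := by
    intro k hk
    have h := hsign k hk.le (p * x k) (fun i hi => hs i k hi hk) (fun i hi hiN => by
      have := hle k i hi hiN
      nlinarith [hx k hk])
    rw [hge, hfx k hk]
    have : (-1) ^ k * ((1 - c)⁻¹ * (0 - c * eval (p * x k) f)) =
      - ((1 - c)⁻¹ * c * ((-1) ^ k * eval (p * x k) f)) := by ring
    rw [this]
    have := mul_nonneg (mul_nonneg hcpos.le hc0) h
    linarith
  have hex : ∀ k, ∃ y, k < N → (0 < y ∧ (∀ i < k, x i ≤ p * y) ∧ y ≤ x k ∧ g.eval y = 0) := by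
    intro k
    by_cases hk : k < N
    swap
    · exact ⟨0, fun h => absurd h hk⟩
    rcases k with _ | k
    · obtain ⟨y, h1, h2, h3⟩ := ivt_sign (fun t => g.eval t) g.continuous 0 0 (x 0) (hx 0 hk).le
        (by simp [hg0]) (hright 0 hk)
      refine ⟨y, fun _ => ⟨lt_of_le_of_ne h1 ?_, by simp, h2, h3⟩⟩
      rintro rfl
      simp only [hg0] at h3; norm_num at h3
    · have hk' : k < N := by omega
      have hsk := hs k (k+1) (by omega) hk
      have hxk := hx k hk'
      have hl : x k / p ≤ x (k+1) := by rw [div_le_iff₀ hp0]; linarith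
      have hxl : x k ≤ x k / p := by rw [le_div_iff₀ hp0]; nlinarith
      have hpl : p * (x k / p) = x k := by field_simp
      have hleft : 0 ≤ (-1) ^ (k+1) * g.eval (x k / p) := by
        have h := hsign (k+1) hk.le (x k / p) (fun i hi => (hle i k (by omega) hk').trans hxl)
          (fun i hi hiN => hl.trans (hle _ _ hi hiN))
        rw [hge, hpl, hfx k hk']
        have : (-1) ^ (k+1) * ((1 - c)⁻¹ * (eval (x k / p) f - c * 0)) =
          (1 - c)⁻¹ * ((-1) ^ (k+1) * eval (x k / p) f) := by ring
        rw [this]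
        exact mul_nonneg hcpos.le h
      obtain ⟨y, h1, h2, h3⟩ := ivt_sign (fun t => g.eval t) g.continuous (k+1) _ _ hl
        hleft (hright _ hk)
      refine ⟨y, fun _ => ⟨by linarith, fun i hi => ?_, h2, h3⟩⟩
      have h4 := hle i k (by omega) hk'
      have h5 := mul_le_mul_of_nonneg_left h1 hp0.le
      linarith
  choose y hy using hex
  have hsep : ∀ i j, i < j → j < N → y i ≤ p * y j := fun i j hij hj =>
    (hy i (by omega)).2.2.1.trans ((hy j hj).2.1 i hij)
  refine ⟨y, fun i hi => (hy i hi).1, hsep, ?_⟩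
  apply factor g N _ hg0 y (fun i hi => (hy i hi).1) _ (fun i hi => (hy i hi).2.2.2)
  · have hfd : f.degree ≤ (N : WithBot ℕ) := by rw [hf]; exact deg_prod N x
    have : g.degree ≤ (N : WithBot ℕ) := by
      rw [degree_le_iff_coeff_zero]
      intro m hm
      have := (degree_le_iff_coeff_zero _ _).1 hfd m hm
      simp [hg, this]
    refine lt_of_le_of_lt this ?_
    exact_mod_cast Nat.lt_succ_self N
  · intro i j hij hj
    have := hsep i j hij hj
    nlinarith [(hy j hj).1]

open Polynomial in
theorem coeff_E (p : ℝ) (hp0 : 0 < p) (hp1 : p < 1) (N n : ℕ) :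
    (∏ i ∈ Finset.range N, (1 - C (p ^ i) * X)).coeff n =
      ∏ k ∈ Finset.range n, ((p ^ N - p ^ k) / (1 - p ^ (k + 1))) := by
  induction N generalizing n with
  | zero =>
    rcases n with _ | n
    · simp
    · rw [Finset.prod_range_succ']; simp [coeff_one]
  | succ N ih =>
    rw [Finset.prod_range_succ, mul_sub, mul_one, ← mul_assoc, coeff_sub]
    rcases n with _ | n
    · have h0 := ih 0
      simp only [Finset.range_zero, Finset.prod_empty] at h0
      rw [h0]; simp
    · have hne : ∀ k : ℕ, 1 - p ^ (k+1) ≠ 0 := fun k => by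
        have := pow_lt_one₀ hp0.le hp1 (Nat.succ_ne_zero k)
        exact (sub_pos.2 this).ne'
      rw [coeff_mul_X, coeff_mul_C, ih, ih, Finset.prod_range_succ, Finset.prod_div_distrib,
        Finset.prod_div_distrib, Finset.prod_range_succ' (fun k => p ^ (N+1) - p ^ k),
        Finset.prod_range_succ (fun k => 1 - p ^ (k+1))]
      have : ∏ k ∈ Finset.range n, (p ^ (N+1) - p ^ (k+1)) = p ^ n * ∏ k ∈ Finset.range n, (p ^ N - p ^ k) := by
        have h1 : p ^ n = ∏ _k ∈ Finset.range n, p := by simp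
        rw [h1, ← Finset.prod_mul_distrib]
        apply Finset.prod_congr rfl
        intro k _; ring
      rw [this]
      have h2 : ∏ k ∈ Finset.range n, (1 - p ^ (k+1)) ≠ 0 := Finset.prod_ne_zero_iff.2 fun k _ => hne k
      have h3 := hne n
      field_simp
      ring

open Polynomial in
theorem case1_poly (p b : ℝ) (hp0 : 0 < p) (hp1 : p < 1) (hb0 : 0 ≤ b) (hb1 : b < 1) (N M : ℕ) :
    ∃ (y : ℕ → ℝ), (∀ i < N, 0 < y i) ∧ (∀ i j, i < j → j < N → y i ≤ p * y j) ∧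
      ∀ n, (∏ i ∈ Finset.range N, (1 - C (y i)⁻¹ * X)).coeff n =
      ∏ k ∈ Finset.range n, ((p ^ N - p ^ k) / (1 - p ^ (k + 1)) *
        ((1 - b * p ^ (M + k)) / (1 - b * p ^ k))) := by
  have hne : ∀ k : ℕ, 1 - b * p ^ k ≠ 0 := fun k => by
    have := pow_le_one₀ (n := k) hp0.le hp1.le
    have h2 : 0 < p ^ k := by positivity
    nlinarith
  induction M with
  | zero =>
    refine ⟨fun i => (p ^ i)⁻¹, fun i _ => by positivity, fun i j hij _ => ?_, fun n => ?_⟩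
    · obtain ⟨d, rfl⟩ := Nat.exists_eq_add_of_lt hij
      have : p * (p ^ (i + d + 1))⁻¹ = (p ^ (i + d))⁻¹ := by field_simp; ring
      rw [this]
      apply inv_anti₀ (by positivity)
      exact pow_le_pow_of_le_one hp0.le hp1.le (by omega)
    · simp only [inv_inv]
      rw [coeff_E p hp0 hp1]
      apply Finset.prod_congr rfl
      intro k _
      rw [zero_add, div_self (hne k), mul_one]
  | succ M ih =>
    obtain ⟨x, hx, hs, hc⟩ := ih
    have hbM : b * p ^ M < 1 := by
      have := pow_le_one₀ (n := M) hp0.le hp1.le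
      have h2 : 0 < p ^ M := by positivity
      nlinarith
    obtain ⟨y, hy, hys, he⟩ := case1_step p (b * p ^ M) hp0 hp1 (by positivity) hbM N x hx hs _ rfl
    refine ⟨y, hy, hys, fun n => ?_⟩
    rw [← he, coeff_C_mul, coeff_sub, coeff_C_mul, comp_C_mul_X_coeff, hc]
    simp only [Finset.prod_mul_distrib, Finset.prod_div_distrib]
    have e1 : (∏ k ∈ Finset.range n, (1 - b * p ^ (M + k))) * (1 - b * p ^ (M + n)) =
        (∏ k ∈ Finset.range n, (1 - b * p ^ (M + 1 + k))) * (1 - b * p ^ M) := by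
      rw [← Finset.prod_range_succ (fun k => 1 - b * p ^ (M + k)), Finset.prod_range_succ']
      simp only [add_zero]
      congr 1
      apply Finset.prod_congr rfl
      intro k _; rw [show M + 1 + k = M + (k + 1) by ring]
    have e2 := hne M
    have e3 : (∏ k ∈ Finset.range n, (1 - b * p ^ (M + 1 + k))) =
      (1 - b * p ^ M)⁻¹ * ((∏ k ∈ Finset.range n, (1 - b * p ^ (M + k))) * (1 - b * p ^ (M + n))) := by
      rw [e1]; field_simp
    rw [e3, pow_add]
    ring

open Filter Topology in
theorem case1 (p b : ℝ) (hp0 : 0 < p) (hp1 : p < 1) (hb0 : 0 ≤ b) (hb1 : b < 1) :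
    PL (fun n => ∏ k ∈ Finset.range n, (-p ^ k / ((1 - p ^ (k + 1)) * (1 - b * p ^ k)))) := by
  choose y hy hys hc using fun N => case1_poly p b hp0 hp1 hb0 hb1 N N
  apply PL.lim (fun N => PL.poly (y N) N (hy N))
  · intro n
    simp_rw [hc]
    apply tendsto_finsetProd
    intro k _
    have t1 := tendsto_pow_atTop_nhds_zero_of_lt_one hp0.le hp1
    have t2 : Tendsto (fun N : ℕ => (p ^ N - p ^ k) / (1 - p ^ (k + 1)) *
        ((1 - b * (p ^ N * p ^ k)) / (1 - b * p ^ k))) atTop (𝓝 ((0 - p ^ k) / (1 - p ^ (k + 1)) *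
        ((1 - b * (0 * p ^ k)) / (1 - b * p ^ k)))) :=
      ((t1.sub_const _).div_const _).mul
        ((((t1.mul_const (p ^ k)).const_mul b).const_sub 1).div_const _)
    have e : -p ^ k / ((1 - p ^ (k + 1)) * (1 - b * p ^ k)) = (0 - p ^ k) / (1 - p ^ (k + 1)) *
        ((1 - b * (0 * p ^ k)) / (1 - b * p ^ k)) := by
      rw [div_mul_div_comm]
      congr 1
      ring
    rw [e]
    refine t2.congr fun N => ?_
    rw [pow_add p N k]
  · intro m
    rw [hc]; simp

theorem alt_head (T : ℕ → ℝ) (hT : ∀ j, 0 ≤ T j) (m : ℕ) (h : ∀ j < m, T j ≤ T (j + 1)) :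
    0 ≤ (-1) ^ m * ∑ j ∈ Finset.range (m + 1), (-1) ^ j * T j ∧
      (-1) ^ m * ∑ j ∈ Finset.range (m + 1), (-1) ^ j * T j ≤ T m := by
  induction m with
  | zero => simp [hT]
  | succ m ih =>
    obtain ⟨h1, h2⟩ := ih fun j hj => h j (by omega)
    rw [Finset.sum_range_succ]
    have e : (-1 : ℝ) ^ (m+1) * (-1) ^ (m + 1) = 1 := by rw [← mul_pow]; norm_num
    have e2 : (-1) ^ (m + 1) * ((∑ j ∈ Finset.range (m + 1), (-1) ^ j * T j) + (-1) ^ (m + 1) * T (m+1)) =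
      T (m+1) - (-1) ^ m * ∑ j ∈ Finset.range (m + 1), (-1) ^ j * T j := by
      rw [mul_add, ← mul_assoc _ _ (T (m+1)), e]; ring
    rw [e2]
    have := h m (by omega)
    constructor <;> linarith

theorem alt_tail (n : ℕ) : ∀ (T : ℕ → ℝ), (∀ j, 0 ≤ T j) → (∀ j, T (j + 1) ≤ T j) →
    0 ≤ ∑ j ∈ Finset.range n, (-1) ^ j * T j ∧ ∑ j ∈ Finset.range n, (-1) ^ j * T j ≤ T 0 := by
  induction n with
  | zero => intro T h _; simp [h]
  | succ n ih =>
    intro T h0 h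
    obtain ⟨h1, h2⟩ := ih (fun j => T (j + 1)) (fun j => h0 _) (fun j => h _)
    rw [Finset.sum_range_succ']
    have : ∑ k ∈ Finset.range n, (-1) ^ (k + 1) * T (k + 1) = - ∑ k ∈ Finset.range n, (-1) ^ k * T (k + 1) := by
      rw [← Finset.sum_neg_distrib]
      apply Finset.sum_congr rfl
      intro k _; ring
    rw [this]
    have := h 0
    simp only [zero_add] at *
    constructor <;> linarith

theorem alt_sign (u : ℕ → ℝ) (hu : ∀ k, 0 < u k) (h4 : ∀ k, 4 * u (k + 1) < u k) (m N : ℕ)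
    (hm : m + 1 ≤ N) :
    0 < (-1) ^ (m + 1) * ∑ j ∈ Finset.range (N + 1), (∏ i ∈ Finset.range j, (-u i)) * (2 / u m) ^ j := by
  have hanti : Antitone u := antitone_nat_of_succ_le fun n => by linarith [h4 n, hu (n+1)]
  set x := 2 / u m with hx
  have hx0 : 0 < x := by have := hu m; positivity
  have hxm : u m * x = 2 := by rw [hx]; field_simp [(hu m).ne']
  set T : ℕ → ℝ := fun j => ∏ i ∈ Finset.range j, (u i * x) with hT
  have hTs : ∀ j, T (j+1) = T j * (u j * x) := fun j => Finset.prod_range_succ _ _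
  have hTp : ∀ j, 0 < T j := fun j => Finset.prod_pos fun i _ => mul_pos (hu i) hx0
  have e : ∀ j, (∏ i ∈ Finset.range j, (-u i)) * x ^ j = (-1) ^ j * T j := by
    intro j
    have h1 : x ^ j = ∏ _i ∈ Finset.range j, x := by simp
    have h2 : (-1 : ℝ) ^ j = ∏ _i ∈ Finset.range j, (-1) := by simp
    rw [h1, h2, hT, ← Finset.prod_mul_distrib, ← Finset.prod_mul_distrib]
    apply Finset.prod_congr rfl
    intro k _; ring
  simp_rw [e]
  obtain ⟨d, rfl⟩ := Nat.exists_eq_add_of_le hm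
  have hge : ∀ j ≤ m, 2 ≤ u j * x := fun j hj => by
    rw [← hxm]; exact mul_le_mul_of_nonneg_right (hanti hj) hx0.le
  have hlt : u (m+1) * x < 1 / 2 := by nlinarith [h4 m]
  have hle : ∀ j, u (m + 1 + j) * x < 1 / 2 := fun j =>
    lt_of_le_of_lt (mul_le_mul_of_nonneg_right (hanti (by omega)) hx0.le) hlt
  obtain ⟨a1, a2⟩ := alt_head T (fun j => (hTp j).le) m (fun j hj => by
    rw [hTs]; nlinarith [hge j hj.le, hTp j])
  obtain ⟨b1, b2⟩ := alt_tail d (fun j => T (m + 1 + 1 + j)) (fun j => (hTp _).le) (fun j => by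
    have := hle (1 + j)
    rw [show m + 1 + 1 + (j + 1) = (m + 1 + 1 + j) + 1 by ring, hTs]
    rw [show m + 1 + (1 + j) = m + 1 + 1 + j by ring] at this
    nlinarith [hTp (m + 1 + 1 + j)])
  rw [show m + 1 + d + 1 = (m + 1 + 1) + d by ring, Finset.sum_range_add, Finset.sum_range_succ _ (m+1)]
  have e3 : ∑ k ∈ Finset.range d, (-1) ^ (m + 1 + 1 + k) * T (m + 1 + 1 + k) =
      -(-1) ^ (m + 1) * ∑ k ∈ Finset.range d, (-1) ^ k * T (m + 1 + 1 + k) := by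
    rw [Finset.mul_sum]
    apply Finset.sum_congr rfl
    intro k _; ring
  rw [e3]
  have e : (-1 : ℝ) ^ (m+1) * (-1) ^ (m + 1) = 1 := by rw [← mul_pow]; norm_num
  have e4 : ∀ A B : ℝ, (-1 : ℝ) ^ (m+1) * (A + (-1) ^ (m+1) * T (m+1) + -(-1) ^ (m+1) * B) =
      T (m+1) - (-1) ^ m * A - B := by
    intro A B
    calc _ = (-1 : ℝ) ^ (m+1) * A + ((-1 : ℝ) ^ (m+1) * (-1) ^ (m + 1)) * (T (m+1) - B) := by ring
      _ = _ := by rw [e]; ring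
  rw [e4]
  have f1 : T (m+1) = 2 * T m := by rw [hTs, hxm]; ring
  have f2 : T (m + 1 + 1) < T (m+1) * (1/2) := by
    rw [hTs (m+1)]; exact mul_lt_mul_of_pos_left hlt (hTp _)
  simp only [add_zero] at b2
  linarith

open Polynomial in
theorem case2_poly (u : ℕ → ℝ) (hu : ∀ k, 0 < u k) (h4 : ∀ k, 4 * u (k + 1) < u k) (N : ℕ) :
    ∃ y : ℕ → ℝ, (∀ i < N, 0 < y i) ∧
      (∑ j ∈ Finset.range (N + 1), C (∏ i ∈ Finset.range j, (-u i)) * X ^ j) =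
        ∏ i ∈ Finset.range N, (1 - C (y i)⁻¹ * X) := by
  have hanti : StrictAnti u := strictAnti_nat_of_succ_lt fun n => by linarith [h4 n, hu (n+1)]
  set f : ℝ[X] := ∑ j ∈ Finset.range (N + 1), C (∏ i ∈ Finset.range j, (-u i)) * X ^ j with hf
  let x : ℕ → ℝ := fun k => Nat.casesOn k 0 (fun m => 2 / u m)
  have hx0 : x 0 = 0 := rfl
  have hxs : ∀ m, x (m+1) = 2 / u m := fun m => rfl
  have hmono : StrictMono x := by
    apply strictMono_nat_of_lt_succ
    intro n
    rcases n with _ | n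
    · rw [hx0, hxs]; have := hu 0; positivity
    · rw [hxs, hxs]
      exact div_lt_div_of_pos_left (by norm_num) (hu _) (hanti (Nat.lt_succ_self n))
  have hfe : ∀ t, f.eval t = ∑ j ∈ Finset.range (N + 1), (∏ i ∈ Finset.range j, (-u i)) * t ^ j := by
    intro t; simp [hf, eval_finsetSum, eval_prod]
  have hf0 : f.eval 0 = 1 := by
    rw [hfe, Finset.sum_range_succ']; simp
  have hsign : ∀ k ≤ N, 0 < (-1) ^ k * f.eval (x k) := by
    intro k hk
    rcases k with _ | k
    · rw [hx0, hf0]; norm_num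
    · rw [hfe]; exact alt_sign u hu h4 k N hk
  have hex : ∀ k, ∃ y, k < N → (x k < y ∧ y < x (k+1) ∧ f.eval y = 0) := by
    intro k
    by_cases hk : k < N
    swap
    · exact ⟨0, fun h => absurd h hk⟩
    have s1 := hsign k hk.le
    have s2 := hsign (k+1) hk
    obtain ⟨y, h1, h2, h3⟩ := ivt_sign (fun t => f.eval t) f.continuous k _ _
      (hmono (Nat.lt_succ_self k)).le s1.le (by rw [pow_succ] at s2; linarith)
    refine ⟨y, fun _ => ⟨lt_of_le_of_ne h1 ?_, lt_of_le_of_ne h2 ?_, h3⟩⟩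
    · rintro rfl; rw [h3] at s1; simp at s1
    · rintro rfl; rw [h3] at s2; simp at s2
  choose y hy using hex
  have hyp : ∀ i < N, 0 < y i := fun i hi =>
    lt_of_le_of_lt (by rw [← hx0]; exact hmono.monotone (Nat.zero_le i)) (hy i hi).1
  refine ⟨y, hyp, ?_⟩
  apply factor f N _ hf0 y hyp _ (fun i hi => (hy i hi).2.2)
  · have : f.degree ≤ (N : WithBot ℕ) := by
      rw [hf]
      rw [degree_le_iff_coeff_zero]
      intro m hm
      rw [finsetSum_coeff]
      simp only [coeff_C_mul_X_pow, Finset.sum_ite_eq, Finset.mem_range]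
      have hm' : N < m := by exact_mod_cast hm
      rw [if_neg (by omega)]
    refine lt_of_le_of_lt this ?_
    exact_mod_cast Nat.lt_succ_self N
  · intro i j hij hj
    exact ((hy i (by omega)).2.1.trans_le (hmono.monotone hij)).trans (hy j hj).1

open Filter Topology in
theorem case2 (u : ℕ → ℝ) (hu : ∀ k, 0 < u k) (h4 : ∀ k, 4 * u (k + 1) < u k) :
    PL (fun n => ∏ k ∈ Finset.range n, (-u k)) := by
  choose y hy hc using fun N => case2_poly u hu h4 N
  have hcoef : ∀ N n, (∏ i ∈ Finset.range N, (1 - Polynomial.C (y N i)⁻¹ * Polynomial.X)).coeff n =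
      if n < N + 1 then ∏ k ∈ Finset.range n, (-u k) else 0 := by
    intro N n
    rw [← hc, Polynomial.finsetSum_coeff]
    simp only [Polynomial.coeff_C_mul_X_pow, Finset.sum_ite_eq, Finset.mem_range]
  apply PL.lim (fun N => PL.poly (y N) N (hy N))
  · intro n
    apply tendsto_const_nhds.congr'
    filter_upwards [eventually_ge_atTop n] with N hN
    rw [hcoef, if_pos (by omega)]
  · intro m
    rw [hcoef]; simp

open Filter Topology in
theorem H_basic (a : ℕ → ℝ) (hsum : ∀ r : ℝ, 0 ≤ r → Summable (fun n => |a n| * r ^ n)) :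
    Differentiable ℂ (fun z : ℂ => ∑' n, (a n : ℂ) * z ^ n) ∧
    ∀ z : ℂ, HasSum (fun n : ℕ => (((n : ℝ) + 1) * a (n + 1) : ℝ) * z ^ n)
      (deriv (fun z : ℂ => ∑' n, (a n : ℂ) * z ^ n) z) := by
  have key : ∀ R : ℝ, 0 < R → DifferentiableOn ℂ (fun z : ℂ => ∑' n, (a n : ℂ) * z ^ n) (Metric.ball 0 R) ∧
      ∀ z ∈ Metric.ball (0:ℂ) R, HasSum (fun n : ℕ => deriv (fun z : ℂ => (a n : ℂ) * z ^ n) z)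
      (deriv (fun z : ℂ => ∑' n, (a n : ℂ) * z ^ n) z) := by
    intro R hR
    have hb : ∀ (i : ℕ) (w : ℂ), w ∈ Metric.ball (0:ℂ) R → ‖(a i : ℂ) * w ^ i‖ ≤ |a i| * R ^ i := by
      intro i w hw
      rw [mem_ball_zero_iff] at hw
      rw [norm_mul, norm_pow, Complex.norm_real, Real.norm_eq_abs]
      gcongr
    constructor
    · exact Complex.differentiableOn_tsum_of_summable_norm (hsum R hR.le)
        (fun i => by fun_prop) Metric.isOpen_ball hb
    · intro z hz
      exact Complex.hasSum_deriv_of_summable_norm (hsum R hR.le)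
        (fun i => by fun_prop) Metric.isOpen_ball hb hz
  constructor
  · intro z
    exact ((key (‖z‖ + 1) (by positivity)).1 z (by simp)).differentiableAt
      (Metric.isOpen_ball.mem_nhds (by simp))
  · intro z
    have h := (key (‖z‖ + 1) (by positivity)).2 z (by simp)
    rw [← hasSum_nat_add_iff' 1] at h
    have e1 : (fun n : ℕ => ((((n : ℝ) + 1) * a (n + 1) : ℝ) : ℂ) * z ^ n) =
        fun n => deriv (fun z : ℂ => (a (n+1) : ℂ) * z ^ (n+1)) z := by
      funext n
      simp
      ring
    rw [e1]
    simpa only [Finset.sum_range_one, pow_zero, deriv_const, sub_zero] using h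

theorem coeff_unique (c d : ℕ → ℂ) (F : ℂ → ℂ) (R : ℝ) (hR : 0 < R)
    (hc : ∀ z, ‖z‖ < R → HasSum (fun n => c n * z ^ n) (F z))
    (hd : ∀ z, ‖z‖ < R → HasSum (fun n => d n * z ^ n) (F z)) : c = d := by
  have key : ∀ c : ℕ → ℂ, (∀ z, ‖z‖ < R → HasSum (fun n => c n * z ^ n) (F z)) →
      HasFPowerSeriesAt F (FormalMultilinearSeries.ofScalars ℂ c) 0 := by
    intro c hc
    rw [hasFPowerSeriesAt_iff]
    filter_upwards [Metric.ball_mem_nhds (0:ℂ) hR] with z hz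
    rw [mem_ball_zero_iff] at hz
    simpa [FormalMultilinearSeries.coeff_ofScalars, mul_comm] using hc z hz
  have h := (key c hc).eq_formalMultilinearSeries (key d hd)
  funext n
  have := congrArg (fun p => FormalMultilinearSeries.coeff p n) h
  simpa [FormalMultilinearSeries.coeff_ofScalars] using this

/-- power series expansion of the log derivative in any larger disc without zeros -/
theorem extend (a p : ℕ → ℝ) (ha0 : a 0 ≠ 0)
    (hsum : ∀ r : ℝ, 0 ≤ r → Summable (fun n => |a n| * r ^ n))
    (hp : ∀ n : ℕ, ((n : ℝ) + 1) * a (n + 1) = - ∑ ij ∈ Finset.HasAntidiagonal.antidiagonal n, p ij.1 * a ij.2)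
    (H : ℂ → ℂ) (hH : H = fun z : ℂ => ∑' n, (a n : ℂ) * z ^ n) (R : ℝ) (hR : 0 < R)
    (hne : ∀ z ∈ Metric.closedBall (0:ℂ) R, H z ≠ 0) (r : ℝ) (hr0 : 0 ≤ r) (hr : r < R) :
    Summable (fun n => |p n| * r ^ n) := by
  obtain ⟨hdiff, hder⟩ := H_basic a hsum
  rw [← hH] at hdiff hder
  have hd1 : Differentiable ℂ (deriv H) := hdiff.deriv
  have hφ : DifferentiableOn ℂ (fun z => -deriv H z / H z) (Metric.closedBall 0 R) :=
    fun z hz => ((hd1 z).neg.div (hdiff z) (hne z hz)).differentiableWithinAt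
  lift R to NNReal using hR.le
  have hps := hφ.hasFPowerSeriesOnBall (by exact_mod_cast hR)
  set q := cauchyPowerSeries (fun z => -deriv H z / H z) 0 R
  set b : ℕ → ℂ := fun n => q.coeff n with hb
  have hnorm : ∀ z : ℂ, ‖z‖ < R → Summable (fun n => ‖b n * z ^ n‖) := by
    intro z hz
    have : z ∈ Metric.eball (0:ℂ) q.radius := by
      refine Metric.eball_subset_eball hps.r_le ?_
      simpa [Metric.eball_coe] using hz
    have := q.summable_norm_apply this
    simpa [FormalMultilinearSeries.apply_eq_pow_smul_coeff, hb, mul_comm] using this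
  have hS : ∀ z : ℂ, ‖z‖ < R → HasSum (fun n => b n * z ^ n) (-deriv H z / H z) := by
    intro z hz
    have := hps.hasSum (y := z) (by simpa [Metric.eball_coe] using hz)
    simpa [FormalMultilinearSeries.apply_eq_pow_smul_coeff, hb, mul_comm] using this
  have hanorm : ∀ z : ℂ, Summable (fun n => ‖(a n : ℂ) * z ^ n‖) := by
    intro z
    simpa using hsum ‖z‖ (norm_nonneg z)
  have hprod : ∀ z : ℂ, ‖z‖ < R → HasSum (fun n => (∑ ij ∈ Finset.HasAntidiagonal.antidiagonal n, b ij.1 * (a ij.2 : ℂ)) * z ^ n) (- deriv H z) := by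
    intro z hz
    have h1 := tsum_mul_tsum_eq_tsum_sum_antidiagonal_of_summable_norm (hnorm z hz) (hanorm z)
    have h2 := (summable_norm_sum_mul_antidiagonal_of_summable_norm (hnorm z hz) (hanorm z)).of_norm
    have h3 := h2.hasSum
    rw [← h1, (hS z hz).tsum_eq] at h3
    have hHz : ∑' n, (a n : ℂ) * z ^ n = H z := by rw [hH]
    rw [hHz, div_mul_cancel₀ _ (hne z (by simpa using hz.le))] at h3
    have e1 : (fun n => (∑ ij ∈ Finset.HasAntidiagonal.antidiagonal n, b ij.1 * (a ij.2 : ℂ)) * z ^ n) =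
        (fun n => ∑ kl ∈ Finset.HasAntidiagonal.antidiagonal n,
          b kl.1 * z ^ kl.1 * ((a kl.2 : ℂ) * z ^ kl.2)) := by
      funext n
      rw [Finset.sum_mul]
      apply Finset.sum_congr rfl
      intro ij hij
      rw [Finset.HasAntidiagonal.mem_antidiagonal] at hij
      rw [← hij, pow_add]; ring
    rw [e1]; exact h3
  have hcoef := coeff_unique _ _ (fun z => - deriv H z) R hR hprod (fun z _ => by
    have := (hder z).neg
    simp only [← neg_mul] at this
    exact this)
  have hbp : b = fun n => (p n : ℂ) := by
    have : PowerSeries.mk b * PowerSeries.mk (fun n => (a n : ℂ)) =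
        PowerSeries.mk (fun n => (p n : ℂ)) * PowerSeries.mk (fun n => (a n : ℂ)) := by
      ext n
      rw [PowerSeries.coeff_mul, PowerSeries.coeff_mul]
      simp only [PowerSeries.coeff_mk]
      have h1 := congrFun hcoef n
      rw [h1, hp n]
      push_cast
      ring
    have hne0 : PowerSeries.mk (fun n => (a n : ℂ)) ≠ 0 := by
      intro h
      have := congrArg (PowerSeries.coeff 0) h
      simp [ha0] at this
    have := mul_right_cancel₀ hne0 this
    funext n
    have := congrArg (PowerSeries.coeff n) this
    simpa using this
  have := hnorm (r : ℂ) (by simpa [abs_of_nonneg hr0] using hr)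
  rw [hbp] at this
  simpa [abs_of_nonneg hr0] using this

open Filter Topology in
theorem analysis (a p : ℕ → ℝ) (ha0 : a 0 ≠ 0) (ha1 : a 1 ≠ 0)
    (hsum : ∀ r : ℝ, 0 ≤ r → Summable (fun n => |a n| * r ^ n))
    (hp0 : ∀ n, 0 ≤ p n)
    (hp : ∀ n : ℕ, ((n : ℝ) + 1) * a (n + 1) = - ∑ ij ∈ Finset.HasAntidiagonal.antidiagonal n, p ij.1 * a ij.2)
    (H : ℂ → ℂ) (hH : H = fun z : ℂ => ∑' n, (a n : ℂ) * z ^ n) (α : ℝ) (hα : α < 1) :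
    ∃ ρ : ℝ, 0 < ρ ∧ (∀ z : ℂ, ‖z‖ ≤ ρ → H z ≠ 0) ∧
      (∀ z : ℂ, 0 < ‖z‖ → ‖z‖ < ρ → α - 1 < (z * deriv H z / H z).re) ∧
      (ρ : ℂ) * deriv H ρ = (α - 1) * H ρ := by
  obtain ⟨hdiff, hder⟩ := H_basic a hsum
  rw [← hH] at hdiff hder
  have hpp : 0 < p 0 := by
    have h := hp 0
    simp at h
    refine lt_of_le_of_ne (hp0 0) fun h0 => ha1 ?_
    rw [h, ← h0]; simp
  have hanorm : ∀ z : ℂ, Summable (fun n => ‖(a n : ℂ) * z ^ n‖) := by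
    intro z
    simpa using hsum ‖z‖ (norm_nonneg z)
  -- the identity for the derivative of H wherever P converges absolutely
  have hode : ∀ z : ℂ, Summable (fun n => p n * ‖z‖ ^ n) →
      deriv H z = - (∑' n, (p n : ℂ) * z ^ n) * H z := by
    intro z hz
    have hnorm : Summable (fun n => ‖(p n : ℂ) * z ^ n‖) := by
      simpa [abs_of_nonneg (hp0 _)] using hz
    have h1 := tsum_mul_tsum_eq_tsum_sum_antidiagonal_of_summable_norm hnorm (hanorm z)
    have hHz : ∑' n, (a n : ℂ) * z ^ n = H z := by rw [hH]
    rw [hHz] at h1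
    rw [neg_mul, h1, ← tsum_neg, ← (hder z).tsum_eq]
    apply tsum_congr
    intro n
    rw [hp n]
    push_cast
    rw [neg_mul, Finset.sum_mul]
    congr 1
    apply Finset.sum_congr rfl
    intro ij hij
    rw [Finset.HasAntidiagonal.mem_antidiagonal] at hij
    rw [← hij, pow_add]; ring
  -- the set
  let X : Set ℝ := {r | 0 ≤ r ∧ ∀ n, ∑ i ∈ Finset.range n, p i * r ^ (i + 1) ≤ 1 - α}
  have hX0 : (0 : ℝ) ∈ X := ⟨le_rfl, fun n => by simp; linarith⟩
  have hXb : BddAbove X := by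
    refine ⟨(1 - α) / p 0, fun r hr => ?_⟩
    have := hr.2 1
    simp at this
    rw [le_div_iff₀ hpp]; linarith
  have hXc : IsClosed X := by
    have : X = Set.Ici 0 ∩ ⋂ n : ℕ, {r | ∑ i ∈ Finset.range n, p i * r ^ (i + 1) ≤ 1 - α} := by
      ext r; simp [X]
    rw [this]
    refine isClosed_Ici.inter (isClosed_iInter fun n => isClosed_le ?_ continuous_const)
    fun_prop
  set ρ := sSup X with hρ
  have hρX : ρ ∈ X := hXc.csSup_mem ⟨0, hX0⟩ hXb
  have hρ0 : 0 ≤ ρ := hρX.1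
  have hsρ : Summable (fun n => p n * ρ ^ (n + 1)) :=
    summable_of_sum_range_le (fun n => mul_nonneg (hp0 n) (by positivity)) hρX.2
  have hSρ : ∑' n, p n * ρ ^ (n + 1) ≤ 1 - α :=
    hsρ.tsum_le_of_sum_range_le hρX.2
  have hsρ' : Summable (fun n => p n * ρ ^ n) := by
    rcases hρ0.eq_or_lt with h | h
    · apply summable_of_ne_finset_zero (s := {0})
      intro n hn
      rw [← h, zero_pow (by simpa using hn), mul_zero]
    · refine (hsρ.mul_right ρ⁻¹).congr fun n => ?_
      field_simp
      ring
  have hsr : ∀ r, 0 ≤ r → r ≤ ρ → Summable (fun n => p n * r ^ n) := by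
    intro r h0 h1
    refine hsρ'.of_nonneg_of_le (fun n => mul_nonneg (hp0 n) (by positivity)) fun n => ?_
    have := hp0 n
    gcongr
  have hne : ∀ z : ℂ, ‖z‖ ≤ ρ → H z ≠ 0 := by
    intro z hz hz0
    have hseg : ∀ t ∈ Set.Icc (0:ℝ) 1, ‖((1 - t : ℝ) : ℂ) * z‖ ≤ ρ := by
      intro t ht
      rw [norm_mul, Complex.norm_real, Real.norm_eq_abs, abs_of_nonneg (by linarith [ht.2])]
      nlinarith [ht.1, ht.2, norm_nonneg z]
    have hd : ∀ t : ℝ, HasDerivAt (fun t : ℝ => H (((1 - t : ℝ) : ℂ) * z))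
        (deriv H (((1 - t : ℝ) : ℂ) * z) * (-z)) t := by
      intro t
      have h1 : HasDerivAt (fun t : ℝ => ((1 - t : ℝ) : ℂ) * z) (-z) t := by
        have := (((hasDerivAt_id t).const_sub 1).ofReal_comp).mul_const z
        simpa using this
      exact (hdiff _).hasDerivAt.comp t h1
    have := eq_zero_of_abs_deriv_le_mul_abs_self_of_eq_zero_right
      (f := fun t : ℝ => H (((1 - t : ℝ) : ℂ) * z))
      (f' := fun t => deriv H (((1 - t : ℝ) : ℂ) * z) * (-z)) (K := (∑' n, p n * ρ ^ n) * ‖z‖)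
      (a := 0) (b := 1)
      (fun t _ => (hd t).continuousAt.continuousWithinAt) (fun t _ => (hd t).hasDerivWithinAt)
      (by simpa using hz0) (by
        intro t ht
        have hw := hseg t ⟨ht.1, ht.2.le⟩
        set w := ((1 - t : ℝ) : ℂ) * z
        have hs := hsr ‖w‖ (norm_nonneg _) hw
        rw [hode w hs, norm_mul, norm_mul, norm_neg, norm_neg]
        have hb : ‖∑' n, (p n : ℂ) * w ^ n‖ ≤ ∑' n, p n * ρ ^ n := by
          refine tsum_of_norm_bounded hsρ'.hasSum fun n => ?_
          rw [norm_mul, norm_pow, Complex.norm_real, Real.norm_eq_abs, abs_of_nonneg (hp0 n)]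
          have := hp0 n
          gcongr
        have := mul_le_mul_of_nonneg_right hb (mul_nonneg (norm_nonneg (H w)) (norm_nonneg z))
        linarith) 1 (by simp)
    simp [hH] at this
    rw [tsum_eq_single 0 (by intro n hn; simp [hn])] at this
    simp at this
    exact ha0 this
  -- extension
  obtain ⟨R, hRρ, hRne⟩ : ∃ R, ρ < R ∧ ∀ z ∈ Metric.closedBall (0:ℂ) R, H z ≠ 0 := by
    obtain ⟨δ, hδ, hsub⟩ := (isCompact_closedBall (0:ℂ) ρ).exists_thickening_subset_open
      (isOpen_ne_fun hdiff.continuous continuous_const : IsOpen {z | H z ≠ 0})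
      (fun z hz => hne z (by simpa using hz))
    rw [thickening_closedBall hδ hρ0] at hsub
    refine ⟨ρ + δ / 2, by linarith, fun z hz => hsub ?_⟩
    simp at hz ⊢
    linarith
  have hRpos : 0 < R := by linarith
  obtain ⟨R1, hR1, hR1R⟩ := exists_between hRρ
  have hsR1 : Summable (fun n => p n * R1 ^ n) := by
    have := extend a p ha0 hsum hp H hH R hRpos hRne R1 (by linarith) hR1R
    simpa [abs_of_nonneg (hp0 _)] using this
  have hsR1' : Summable (fun n => p n * R1 ^ (n + 1)) :=
    (hsR1.mul_right R1).congr fun n => by ring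
  let S : ℝ → ℝ := fun r => ∑' n, p n * r ^ (n + 1)
  have hScont : ContinuousOn S (Set.Icc 0 R1) := by
    refine continuousOn_tsum (fun n => by fun_prop) hsR1' fun n r hr => ?_
    rw [norm_mul, norm_pow, Real.norm_eq_abs, Real.norm_eq_abs, abs_of_nonneg (hp0 n),
      abs_of_nonneg hr.1]
    have := hp0 n
    have := hr.1
    have := hr.2
    gcongr
  have hSeq : S ρ = 1 - α := by
    by_contra hcon
    have hlt : S ρ < 1 - α := lt_of_le_of_ne hSρ hcon
    have hcw : ContinuousWithinAt S (Set.Ioc ρ R1) ρ :=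
      (hScont ρ ⟨hρ0, hR1.le⟩).mono fun x hx => ⟨hρ0.trans hx.1.le, hx.2⟩
    have hev : ∀ᶠ r in 𝓝[Set.Ioc ρ R1] ρ, S r < 1 - α := hcw.eventually_lt_const hlt
    rw [nhdsWithin_Ioc_eq_nhdsGT hR1] at hev
    obtain ⟨r, hr1, hr2⟩ := (hev.and (Ioc_mem_nhdsGT hR1)).exists
    have hr0 : 0 ≤ r := hρ0.trans hr2.1.le
    have hsr1 : Summable (fun n => p n * r ^ (n + 1)) := by
      refine hsR1'.of_nonneg_of_le (fun n => mul_nonneg (hp0 n) (by positivity)) fun n => ?_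
      have := hp0 n
      have := hr2.2
      gcongr
    have hrX : r ∈ X := ⟨hr0, fun n =>
      (hsr1.sum_le_tsum _ fun i _ => mul_nonneg (hp0 i) (by positivity)).trans hr1.le⟩
    exact absurd (le_csSup hXb hrX) (not_le.2 hr2.1)
  have hρpos : 0 < ρ := by
    refine lt_of_le_of_ne hρ0 fun h => ?_
    rw [← h] at hSeq
    simp [S] at hSeq
    linarith
  refine ⟨ρ, hρpos, hne, ?_, ?_⟩
  · intro z hz0 hz
    have hs := hsr ‖z‖ hz0.le hz.le
    have hs' : Summable (fun n => p n * ‖z‖ ^ (n + 1)) :=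
      (hs.mul_right ‖z‖).congr fun n => by ring
    rw [hode z hs]
    have e : z * (-(∑' n, (p n : ℂ) * z ^ n) * H z) / H z = - (z * ∑' n, (p n : ℂ) * z ^ n) := by
      have := hne z hz.le
      field_simp
    rw [e, Complex.neg_re]
    have h1 : ‖z * ∑' n, (p n : ℂ) * z ^ n‖ ≤ S ‖z‖ := by
      rw [← tsum_mul_left]
      refine tsum_of_norm_bounded hs'.hasSum fun n => ?_
      rw [norm_mul, norm_mul, norm_pow, Complex.norm_real, Real.norm_eq_abs, abs_of_nonneg (hp0 n)]
      apply le_of_eq; ring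
    have h2 : S ‖z‖ < S ρ := by
      refine Summable.tsum_lt_tsum (i := 0) (fun n => ?_) ?_ hs' hsρ
      · have := hp0 n
        have := hz.le
        gcongr
      · simpa using mul_lt_mul_of_pos_left hz hpp
    have h3 := Complex.re_le_norm (z * ∑' n, (p n : ℂ) * z ^ n)
    linarith
  · have hs : Summable (fun n => p n * ‖(ρ : ℂ)‖ ^ n) := by
      simpa [abs_of_nonneg hρ0] using hsρ'
    rw [hode ρ hs]
    have : ((1 - α : ℝ) : ℂ) = ρ * ∑' n, (p n : ℂ) * (ρ : ℂ) ^ n := by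
      rw [← hSeq, ← tsum_mul_left]
      simp only [S]
      push_cast
      apply tsum_congr
      intro n; ring
    push_cast at this
    calc _ = - (ρ * ∑' n, (p n : ℂ) * (ρ : ℂ) ^ n) * H ρ := by ring
      _ = _ := by rw [← this]; ring

theorem qPoch_aux (q a : ℝ) (hq0 : 0 < q) (hq1 : q < 1) : Summable (fun k : ℕ => ‖-(a * q ^ k)‖) := by
  have := ((summable_geometric_of_lt_one hq0.le hq1).mul_left |a|)
  refine this.congr fun k => ?_
  simp [abs_mul, abs_of_pos hq0]

theorem qPoch_succ (q a : ℝ) (hq0 : 0 < q) (hq1 : q < 1) :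
    qPochInf a q = (1 - a) * qPochInf (a * q) q := by
  have e : (fun k : ℕ => 1 - a * q ^ (k + 1)) = fun k : ℕ => 1 + -(a * q * q ^ k) := by
    funext k
    ring
  have hm : Multipliable (fun k : ℕ => 1 - a * q ^ (k + 1)) := by
    rw [e]
    exact multipliable_one_add_of_summable (qPoch_aux q (a * q) hq0 hq1)
  have h := tprod_eq_zero_mul' (f := fun k : ℕ => 1 - a * q ^ k) hm
  have e2 : qPochInf (a * q) q = ∏' k : ℕ, (1 - a * q ^ (k + 1)) := by
    unfold qPochInf
    refine tprod_congr fun k => ?_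
    ring
  rw [e2]
  unfold qPochInf
  rw [h, pow_zero, mul_one]

theorem qPoch_ne (q a : ℝ) (hq0 : 0 < q) (hq1 : q < 1) (ha0 : 0 ≤ a) (ha : a < 1) :
    qPochInf a q ≠ 0 := by
  unfold qPochInf
  have := tprod_one_add_ne_zero_of_summable (f := fun k : ℕ => -(a * q ^ k)) (fun k => by
    have h1 := pow_le_one₀ (n := k) hq0.le hq1.le
    have h2 : 0 < q ^ k := by positivity
    have h3 : a * q ^ k < 1 := by nlinarith
    have h4 : 0 < 1 + -(a * q ^ k) := by linarith
    exact h4.ne') (qPoch_aux q a hq0 hq1)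
  simpa [sub_eq_add_neg] using this

theorem qGamma_ne (q x : ℝ) (hq0 : 0 < q) (hq1 : q < 1) (hx : 0 < x) : qGamma q x ≠ 0 := by
  unfold qGamma
  have h1 := qPoch_ne q q hq0 hq1 hq0.le hq1
  have h2 := qPoch_ne q (q ^ x) hq0 hq1 (Real.rpow_nonneg hq0.le x) (Real.rpow_lt_one hq0.le hq1 hx)
  have h3 : (1 - q) ^ (1 - x) ≠ 0 := (Real.rpow_pos_of_pos (by linarith) _).ne'
  exact div_ne_zero (mul_ne_zero h1 h3) h2

theorem qGamma_succ (q x : ℝ) (hq0 : 0 < q) (hq1 : q < 1) (hx : 0 < x) :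
    qGamma q (x + 1) = (1 - q ^ x) / (1 - q) * qGamma q x := by
  unfold qGamma
  have hx1 := Real.rpow_lt_one hq0.le hq1 hx
  have h0 : 1 - q ^ x ≠ 0 := (sub_pos.2 hx1).ne'
  have e : qPochInf (q ^ x) q = (1 - q ^ x) * qPochInf (q ^ (x + 1)) q := by
    rw [qPoch_succ q _ hq0 hq1, Real.rpow_add hq0, Real.rpow_one]
  have h2 := qPoch_ne q (q ^ (x+1)) hq0 hq1 (Real.rpow_nonneg hq0.le _)
    (Real.rpow_lt_one hq0.le hq1 (by linarith))
  have h3 : (1 - q) ^ (1 - x) = (1 - q) ^ (1 - (x + 1)) * (1 - q) := by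
    rw [← Real.rpow_add_one (sub_pos.2 hq1).ne']
    congr 1; ring
  have h4 : 1 - q ≠ 0 := (sub_pos.2 hq1).ne'
  rw [e, h3]
  field_simp

noncomputable def coefA (γ σ q : ℝ) (n : ℕ) : ℝ :=
  (-1) ^ n * σ ^ (2 * n) * q ^ (n * (n - 1)) / qGamma q (2 * n + γ + 1)

noncomputable def uA (γ q : ℝ) (n : ℕ) : ℝ :=
  q ^ (2 * n) / ((1 - q ^ (γ + 1) * q ^ (2 * n)) * (1 - q ^ (γ + 1) * q ^ (2 * n + 1)))

theorem rp_lt (γ q : ℝ) (hq0 : 0 < q) (hq1 : q < 1) (hγ0 : 0 ≤ γ) (n : ℕ) :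
    q ^ (γ + 1) * q ^ n < 1 := by
  have h1 := Real.rpow_lt_one hq0.le hq1 (by linarith : 0 < γ + 1)
  have h2 := pow_le_one₀ (n := n) hq0.le hq1.le
  have h3 : 0 < q ^ n := by positivity
  nlinarith

theorem uA_pos (γ q : ℝ) (hq0 : 0 < q) (hq1 : q < 1) (hγ0 : 0 ≤ γ) (n : ℕ) : 0 < uA γ q n := by
  unfold uA
  have h1 := sub_pos.2 (rp_lt γ q hq0 hq1 hγ0 (2 * n))
  have h2 := sub_pos.2 (rp_lt γ q hq0 hq1 hγ0 (2 * n + 1))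
  positivity

theorem coefA_ne (γ σ q : ℝ) (hq0 : 0 < q) (hq1 : q < 1) (hσ : 0 < σ) (hγ0 : 0 ≤ γ) (n : ℕ) :
    coefA γ σ q n ≠ 0 := by
  unfold coefA
  refine div_ne_zero ?_ (qGamma_ne q _ hq0 hq1 (by positivity))
  have := hσ.ne'
  have := hq0.ne'
  positivity

theorem coefA_succ (γ σ q : ℝ) (hq0 : 0 < q) (hq1 : q < 1) (hγ0 : 0 ≤ γ) (n : ℕ) :
    coefA γ σ q (n + 1) = coefA γ σ q n * ((σ ^ 2 * (1 - q) ^ 2) * (-uA γ q n)) := by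
  unfold coefA uA
  have h1 := (sub_pos.2 (rp_lt γ q hq0 hq1 hγ0 (2 * n))).ne'
  have h2 := (sub_pos.2 (rp_lt γ q hq0 hq1 hγ0 (2 * n + 1))).ne'
  have h4 : 1 - q ≠ 0 := (sub_pos.2 hq1).ne'
  have hg := qGamma_ne q (2 * n + γ + 1) hq0 hq1 (by positivity)
  have e1 : (2 * ((n + 1 : ℕ) : ℝ) + γ + 1) = (2 * n + γ + 1) + 1 + 1 := by push_cast; ring
  have e2 : q ^ (2 * (n : ℝ) + γ + 1) = q ^ (γ + 1) * q ^ (2 * n) := by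
    rw [← Real.rpow_natCast q (2 * n), ← Real.rpow_add hq0]; congr 1; push_cast; ring
  have e3 : q ^ (2 * (n : ℝ) + γ + 1 + 1) = q ^ (γ + 1) * q ^ (2 * n + 1) := by
    rw [← Real.rpow_natCast q (2 * n + 1), ← Real.rpow_add hq0]; congr 1; push_cast; ring
  rw [e1, qGamma_succ q _ hq0 hq1 (by positivity), qGamma_succ q _ hq0 hq1 (by positivity), e2, e3]
  have e4 : q ^ ((n + 1) * (n + 1 - 1)) = q ^ (n * (n - 1)) * q ^ (2 * n) := by
    rw [← pow_add]; congr 1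
    rcases n with _ | n
    · rfl
    · simp; ring
  rw [e4]
  field_simp
  ring

theorem coefA_eq (γ σ q : ℝ) (hq0 : 0 < q) (hq1 : q < 1) (hγ0 : 0 ≤ γ) (n : ℕ) :
    coefA γ σ q n = coefA γ σ q 0 * (σ ^ 2 * (1 - q) ^ 2) ^ n * ∏ k ∈ Finset.range n, (-uA γ q k) := by
  induction n with
  | zero => simp
  | succ n ih => rw [coefA_succ γ σ q hq0 hq1 hγ0, ih, Finset.prod_range_succ]; ring

open Filter Topology in
theorem coefA_summable (γ σ q : ℝ) (hq0 : 0 < q) (hq1 : q < 1) (hσ : 0 < σ) (hγ0 : 0 ≤ γ)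
    (r : ℝ) (hr : 0 ≤ r) : Summable (fun n => |coefA γ σ q n| * r ^ n) := by
  rcases hr.eq_or_lt with h | h
  · apply summable_of_ne_finset_zero (s := {0})
    intro n hn
    rw [← h, zero_pow (by simpa using hn), mul_zero]
  have hne := coefA_ne γ σ q hq0 hq1 hσ hγ0
  apply summable_of_ratio_test_tendsto_lt_one (l := 0) (by norm_num)
  · exact Eventually.of_forall fun n => mul_ne_zero (abs_ne_zero.2 (hne n)) (by positivity)
  · have e : ∀ n, ‖|coefA γ σ q (n+1)| * r ^ (n+1)‖ / ‖|coefA γ σ q n| * r ^ n‖ =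
        σ ^ 2 * (1 - q) ^ 2 * r * uA γ q n := by
      intro n
      have hu := uA_pos γ q hq0 hq1 hγ0 n
      have h1 := abs_ne_zero.2 (hne n)
      rw [coefA_succ γ σ q hq0 hq1 hγ0]
      simp only [norm_mul, norm_pow, Real.norm_eq_abs, abs_abs, abs_mul, abs_neg, abs_pow,
        abs_of_pos h, abs_of_pos hu, abs_of_pos hσ, abs_of_pos (sub_pos.2 hq1)]
      field_simp
      ring
    simp_rw [e]
    have t1 := tendsto_pow_atTop_nhds_zero_of_lt_one hq0.le hq1
    have t2 : Tendsto (fun n : ℕ => q ^ (2 * n)) atTop (𝓝 0) :=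
      t1.comp (tendsto_id.const_mul_atTop' (by norm_num : 0 < 2))
    have t3 : Tendsto (fun n : ℕ => q ^ (2 * n + 1)) atTop (𝓝 0) := by
      have := t2.mul_const q
      simpa [pow_succ] using this
    have t4 : Tendsto (uA γ q) atTop (𝓝 (0 / ((1 - q ^ (γ + 1) * 0) * (1 - q ^ (γ + 1) * 0)))) :=
      t2.div (((t2.const_mul _).const_sub 1).mul ((t3.const_mul _).const_sub 1)) (by simp)
    simpa using t4.const_mul (σ ^ 2 * (1 - q) ^ 2 * r)

theorem coefA_PL (γ σ q : ℝ) (hq0 : 0 < q) (hq1 : q < 1) (hγ0 : 0 ≤ γ)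
    (hR : condR q γ) : PL (coefA γ σ q) := by
  suffices h : PL (fun n => ∏ k ∈ Finset.range n, (-uA γ q k)) by
    have := h.scale (σ ^ 2 * (1 - q) ^ 2) (coefA γ σ q 0) (by positivity)
    have e : coefA γ σ q = fun n => coefA γ σ q 0 * (σ ^ 2 * (1 - q) ^ 2) ^ n *
      ∏ k ∈ Finset.range n, (-uA γ q k) := funext (coefA_eq γ σ q hq0 hq1 hγ0)
    rw [e]; exact this
  rcases hR with (rfl | rfl) | ⟨hγ, hγ1, hc⟩
  · have := case1 (q ^ 2) q (by positivity) (by nlinarith) hq0.le hq1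
    convert this using 4 with n k
    unfold uA
    rw [zero_add, Real.rpow_one, neg_div, ← pow_mul, ← pow_mul, mul_comm (1 - q ^ _)]
    congr 3
    ring
  · have := case1 (q ^ 2) (q ^ 3) (by positivity) (by nlinarith) (by positivity)
      (pow_lt_one₀ hq0.le hq1 (by norm_num))
    convert this using 4 with n k
    unfold uA
    have : q ^ ((1:ℝ) + 1) = q ^ 2 := by
      rw [← Real.rpow_natCast]; norm_num
    rw [this, neg_div, ← pow_mul, ← pow_mul]
    congr 3 <;> ring
  · apply case2 _ (uA_pos γ q hq0 hq1 hγ0)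
    have hb1 : 0 < 1 - q ^ (γ + 1) := sub_pos.2 (Real.rpow_lt_one hq0.le hq1 (by linarith))
    have hb2 : 0 < 1 - q ^ (γ + 2) := sub_pos.2 (Real.rpow_lt_one hq0.le hq1 (by linarith))
    have hb1' : 1 - q ^ (γ + 1) < 1 := by have := Real.rpow_pos_of_pos hq0 (γ + 1); linarith
    have hb2' : 1 - q ^ (γ + 2) < 1 := by have := Real.rpow_pos_of_pos hq0 (γ + 2); linarith
    have hq2 : q < 1 / 2 := by
      rw [mul_assoc, mul_assoc, inv_mul_eq_div, lt_div_iff₀ hq0, one_mul] at hc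
      have h1 : (1 - q ^ (γ + 1)) * (1 - q ^ (γ + 2)) < 1 := by nlinarith
      nlinarith
    intro k
    unfold uA
    set b := q ^ (γ + 1)
    have hbp : 0 < b := Real.rpow_pos_of_pos hq0 _
    have c0 := sub_pos.2 (rp_lt γ q hq0 hq1 hγ0 (2 * k))
    have c1 := sub_pos.2 (rp_lt γ q hq0 hq1 hγ0 (2 * k + 1))
    have d0 : 1 - b * q ^ (2 * k) ≤ 1 - b * q ^ (2 * (k + 1)) := by
      have := pow_le_pow_of_le_one hq0.le hq1.le (by omega : 2 * k ≤ 2 * (k + 1))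
      nlinarith
    have d1 : 1 - b * q ^ (2 * k + 1) ≤ 1 - b * q ^ (2 * (k + 1) + 1) := by
      have := pow_le_pow_of_le_one hq0.le hq1.le (by omega : 2 * k + 1 ≤ 2 * (k + 1) + 1)
      nlinarith
    have hk : 0 < q ^ (2 * k) := by positivity
    have hnum : 4 * q ^ (2 * (k + 1)) < q ^ (2 * k) := by
      have : q ^ (2 * (k + 1)) = q ^ (2 * k) * q ^ 2 := by ring
      rw [this]
      nlinarith [mul_pos hk (by nlinarith : 0 < 1 - 4 * q ^ 2)]
    rw [← mul_div_assoc]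
    apply div_lt_div₀ hnum _ hk.le (mul_pos c0 c1)
    exact mul_le_mul d0 d1 c1.le (c0.le.trans d0)

theorem stmt8 (q σ γ : ℝ) (hq0 : 0 < q) (hq1 : q < 1) (hσ : 0 < σ)
    (hγ0 : 0 ≤ γ) (hγ2 : γ < 2) (hR : condR q γ)
    (α : ℝ) (hα0 : 0 ≤ α) (hα1 : α < 1) :
    ∃ z1 : ℝ,
      IsLeast {r : ℝ | 0 < r ∧
        Real.sqrt r * deriv (qMLR γ σ q) (Real.sqrt r) -
          2 * (α - 1) * qMLR γ σ q (Real.sqrt r) = 0} z1 ∧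
      radiusStarlike α (hML γ σ q) = z1 := by
  have hsum := coefA_summable γ σ q hq0 hq1 hσ hγ0
  have hne := coefA_ne γ σ q hq0 hq1 hσ hγ0
  obtain ⟨p, hp0, hp⟩ := coefA_PL γ σ q hq0 hq1 hγ0 hR
  set H : ℂ → ℂ := fun z => ∑' n, (coefA γ σ q n : ℂ) * z ^ n with hH
  have hdiff : Differentiable ℂ H := (H_basic _ hsum).1
  obtain ⟨ρ, hρ, hHne, hre, hroot⟩ := analysis (coefA γ σ q) p (hne 0) (hne 1) hsum hp0 hp H hH α hα1
  have hreal : ∀ x : ℝ, H x = (((H x).re : ℝ) : ℂ) := by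
    intro x
    have : H x = ((∑' n, coefA γ σ q n * x ^ n : ℝ) : ℂ) := by
      rw [hH, Complex.ofReal_tsum]; push_cast; rfl
    rw [this, Complex.ofReal_re]
  have hq : qMLR γ σ q = fun x => (H ((x ^ 2 : ℝ) : ℂ)).re := by
    funext x
    have : H ((x ^ 2 : ℝ) : ℂ) = ((∑' n, coefA γ σ q n * (x ^ 2) ^ n : ℝ) : ℂ) := by
      rw [hH, Complex.ofReal_tsum]; push_cast; rfl
    rw [this, Complex.ofReal_re]
    unfold qMLR coefA
    apply tsum_congr
    intro n
    rw [pow_mul x]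
  have hqd : ∀ x : ℝ, deriv (qMLR γ σ q) x = (deriv H ((x ^ 2 : ℝ) : ℂ)).re * (2 * x) := by
    intro x
    rw [hq]
    have h1 : HasDerivAt (fun y : ℝ => (H (y : ℂ)).re) (deriv H ((x ^ 2 : ℝ) : ℂ)).re (x ^ 2) :=
      (hdiff ((x ^ 2 : ℝ) : ℂ)).hasDerivAt.real_of_complex
    have h2 : HasDerivAt (fun x : ℝ => x ^ 2) (2 * x) x := by
      simpa using hasDerivAt_pow 2 x
    exact (HasDerivAt.comp (h₂ := fun y : ℝ => (H (y : ℂ)).re) (h := fun x : ℝ => x ^ 2) x h1 h2).deriv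
  have heq : ∀ r : ℝ, 0 < r → (Real.sqrt r * deriv (qMLR γ σ q) (Real.sqrt r) -
          2 * (α - 1) * qMLR γ σ q (Real.sqrt r) = 0 ↔
        r * (deriv H r).re = (α - 1) * (H r).re) := by
    intro r hr
    rw [hqd, hq]
    simp only [Real.sq_sqrt hr.le]
    have : √r * ((deriv H r).re * (2 * √r)) = 2 * (r * (deriv H r).re) := by
      have := Real.mul_self_sqrt hr.le
      calc _ = 2 * ((√r * √r) * (deriv H r).re) := by ring
        _ = _ := by rw [this]
    rw [this]
    constructor <;> intro h <;> linarith
  have hG : (qGamma q (γ + 1) : ℂ) ≠ 0 := by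
    exact_mod_cast qGamma_ne q (γ + 1) hq0 hq1 (by linarith)
  have hhML : hML γ σ q = fun z => z * (qGamma q (γ + 1) : ℂ) * H z := rfl
  have hlog : ∀ z : ℂ, z ≠ 0 → H z ≠ 0 →
      z * deriv (hML γ σ q) z / hML γ σ q z = 1 + z * deriv H z / H z := by
    intro z hz hHz
    have hd : HasDerivAt (hML γ σ q) (1 * (qGamma q (γ + 1) : ℂ) * H z +
        z * (qGamma q (γ + 1) : ℂ) * deriv H z) z := by
      rw [hhML]
      exact ((hasDerivAt_id z).mul_const _).mul (hdiff z).hasDerivAt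
    rw [hd.deriv, hhML]
    field_simp
  refine ⟨ρ, ⟨⟨hρ, ?_⟩, ?_⟩, ?_⟩
  · rw [heq ρ hρ]
    have h := congrArg Complex.re hroot
    rw [Complex.re_ofReal_mul] at h
    rw [h, ← Complex.ofReal_one, ← Complex.ofReal_sub, Complex.re_ofReal_mul]
  · rintro r ⟨hr0, hr⟩
    by_contra hlt
    push Not at hlt
    rw [heq r hr0] at hr
    have hnr : ‖(r : ℂ)‖ = r := by simp [abs_of_pos hr0]
    have h1 := hre r (by rw [hnr]; exact hr0) (by rw [hnr]; exact hlt)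
    have h2 := hHne r (by rw [hnr]; exact hlt.le)
    rw [hreal r] at h1 h2
    have h3 : (H r).re ≠ 0 := by exact_mod_cast h2
    rw [Complex.div_ofReal_re, Complex.re_ofReal_mul, hr, mul_div_assoc, div_self h3, mul_one] at h1
    exact lt_irrefl _ h1
  · unfold radiusStarlike
    apply IsGreatest.csSup_eq
    constructor
    · refine ⟨hρ, fun z hz0 hz => ?_⟩
      rw [hlog z (norm_pos_iff.1 hz0) (hHne z hz.le), Complex.add_re, Complex.one_re]
      linarith [hre z hz0 hz]
    · rintro r ⟨hr0, hr⟩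
      by_contra hlt
      push Not at hlt
      have hnr : ‖(ρ : ℂ)‖ = ρ := by simp [abs_of_pos hρ]
      have h1 := hr ρ (by rw [hnr]; exact hρ) (by rw [hnr]; exact hlt)
      have h2 := hHne ρ (by rw [hnr])
      rw [hlog ρ (by exact_mod_cast hρ.ne') h2, hroot, mul_div_assoc, div_self h2] at h1
      simp at h1
end
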